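/- arXiv:1710.00374 — 2 statements merged into one kernel-verified Lean document; each statement's English description precedes it below -/
import Mathlib

section
/- Let ℓ ≥ 2, let a ≥ 0 and b ≥ 2 be given. Then forb(m, 3, (𝒯_ℓ(3) \ 𝒯_ℓ(2)) ∪ {F_{a,b,b,a}}) is Θ(forbmax(m, F_{a,b,b,a})): there exist constants c₁, c₂ > 0 such that for all m ≥ 1, c₁ · forbmax(m, F_{a,b,b,a}) ≤ forb(m, 3, (𝒯_ℓ(3) \ 𝒯_ℓ(2)) ∪ {F_{a,b,b,a}}) ≤ c₂ · forbmax(m, F_{a,b,b,a}). -/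
/-- A matrix with natural number entries, of size `k × p`. -/
abbrev MatN (k p : ℕ) := Matrix (Fin k) (Fin p) ℕ

/-- A matrix bundled with its dimensions. -/
structure CMat where
  rows : ℕ
  cols : ℕ
  mat : MatN rows cols

/-- A matrix is simple if no two of its columns are equal. -/
def SimpleM {m n : ℕ} (A : MatN m n) : Prop :=
  ∀ j₁ j₂ : Fin n, (∀ i, A i j₁ = A i j₂) → j₁ = j₂

/-- An `r`-matrix: all entries lie in `{0, 1, …, r-1}`. -/
def RMat (r : ℕ) {m n : ℕ} (A : MatN m n) : Prop := ∀ i j, A i j < r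

/-- `F` is a configuration of `A` (written `F ≺ A`): some submatrix of `A` is a row
and column permutation of `F`; equivalently there are injections of the rows and
columns of `F` into those of `A` realizing the entries of `F`. -/
def IsConfig {k p m n : ℕ} (F : MatN k p) (A : MatN m n) : Prop :=
  ∃ f : Fin k → Fin m, ∃ g : Fin p → Fin n,
    Function.Injective f ∧ Function.Injective g ∧ ∀ i j, A (f i) (g j) = F i j

/-- `A` avoids every matrix of the family `𝓕` as a configuration. -/
def AvoidsFam {m n : ℕ} (A : MatN m n) (𝓕 : Set CMat) : Prop :=
  ∀ F ∈ 𝓕, ¬ IsConfig F.mat A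

/-- `forb m r 𝓕`: the maximum number of columns of an `m`-rowed simple `r`-matrix
having no member of `𝓕` as a configuration. -/
noncomputable def forb (m r : ℕ) (𝓕 : Set CMat) : ℕ :=
  sSup { n : ℕ | ∃ A : MatN m n, RMat r A ∧ SimpleM A ∧ AvoidsFam A 𝓕 }

/-- `forbmax m r 𝓕`: the maximum of `forb m' r 𝓕` over `m' ≤ m`. -/
noncomputable def forbmax (m r : ℕ) (𝓕 : Set CMat) : ℕ :=
  sSup { x : ℕ | ∃ m' ≤ m, x = forb m' r 𝓕 }

/-- The number of 1's in column `j` of `A` (the column sum). -/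
def colSum {m n : ℕ} (A : MatN m n) (j : Fin n) : ℕ :=
  (Finset.univ.filter (fun i => A i j = 1)).card

/-- `forbK k m r 𝓕`: as `forb`, but restricted to matrices all of whose columns
have exactly `k` entries equal to 1. -/
noncomputable def forbK (k m r : ℕ) (𝓕 : Set CMat) : ℕ :=
  sSup { n : ℕ | ∃ A : MatN m n, RMat r A ∧ SimpleM A ∧ (∀ j, colSum A j = k) ∧
    AvoidsFam A 𝓕 }

/-- `forbmaxK k m r 𝓕`: the maximum of `forbK k m' r 𝓕` over `m' ≤ m`. -/
noncomputable def forbmaxK (k m r : ℕ) (𝓕 : Set CMat) : ℕ :=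
  sSup { x : ℕ | ∃ m' ≤ m, x = forbK k m' r 𝓕 }

/-- `Imat ℓ a b`: the `ℓ × ℓ` matrix with `a` on the diagonal and `b` off the diagonal. -/
def Imat (ℓ a b : ℕ) : MatN ℓ ℓ := fun i j => if i = j then a else b

/-- `Tmat ℓ a b`: the `ℓ × ℓ` matrix with `a` below the diagonal and `b` on or above it. -/
def Tmat (ℓ a b : ℕ) : MatN ℓ ℓ := fun i j => if (j : ℕ) < (i : ℕ) then a else b

/-- `Tmat3 ℓ a b c`: the `ℓ × ℓ` matrix with `a` below, `b` on, and `c` above the diagonal. -/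
def Tmat3 (ℓ a b c : ℕ) : MatN ℓ ℓ :=
  fun i j => if (j : ℕ) < (i : ℕ) then a else if i = j then b else c

/-- The family `𝒯_ℓ(r)` of all `I_ℓ(a,b)` and `T_ℓ(a,b)` with `a,b ∈ {0,…,r-1}`, `a ≠ b`. -/
def TFam (ℓ r : ℕ) : Set CMat :=
  { M | ∃ a b : ℕ, a < r ∧ b < r ∧ a ≠ b ∧
      (M = ⟨ℓ, ℓ, Imat ℓ a b⟩ ∨ M = ⟨ℓ, ℓ, Tmat ℓ a b⟩) }

/-- `t·F`: the concatenation of `t` copies of `F` side by side. -/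
def tcopies {k p : ℕ} (t : ℕ) (F : MatN k p) : MatN k (t * p) :=
  fun i j => F i ⟨(j : ℕ) % p, Nat.mod_lt _ (by
    rcases Nat.eq_zero_or_pos p with h | h
    · exact absurd j.isLt (by simp [h])
    · exact h)⟩

/-- `0×1×F`: `F` with an extra row of 0's and an extra row of 1's appended. -/
def zeroOneTop {k p : ℕ} (F : MatN k p) : MatN (k + 2) p :=
  fun i j => if h : (i : ℕ) < k then F ⟨i, h⟩ j else if (i : ℕ) = k then 0 else 1

/-- `F_{a,b,c,d}`: the `(a+b+c+d) × 2` matrix with `a` rows `[1 1]`, `b` rows `[1 0]`,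
`c` rows `[0 1]` and `d` rows `[0 0]`. -/
def Fabcd (a b c d : ℕ) : MatN (a + b + c + d) 2 :=
  fun i j =>
    if (i : ℕ) < a then 1
    else if (i : ℕ) < a + b then (if (j : ℕ) = 0 then 1 else 0)
    else if (i : ℕ) < a + b + c then (if (j : ℕ) = 0 then 0 else 1)
    else 0

/-!
Both quantities have order `m ^ (max a 1 + b - 1)`.

Upper bound: split the columns over `{0, 1, 2}` by their number `k` of ones. Since
`𝒯_ℓ(3) \ 𝒯_ℓ(2)` is avoided, Ramsey's theorem applied to columns with pairwise different sets of
twos yields long chains in which any column `x` and later column `y` have many rows `[1 1]`, `[1 0]`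
and `[0 0]`, hence fewer than `b` rows `[0 1]`. Among columns with equally many ones these chains
have bounded length, so only boundedly many sets of twos occur for each `k`. For a fixed set of
twos, the sets of ones of the columns with at least as many zeros as ones form a `k`-uniform family
in which sharing `a` points forces a difference of less than `b` points; here we may assume `1 ≤ a`.
Its size is at most a constant times `m ^ (a + b - 1)` with a further saving that makes the sum over
`k` converge: `1 / (k + 1) ^ 2` for `2 ≤ a`, by double counting the `a`-subsets, and `1 / m` for
`a = 1` and large `k`, where the family falls into classes with disjoint unions. The columns with
more ones than zeros reduce to these by exchanging `0` and `1`.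

Lower bound: the `(a + b - 1)`-subsets for `1 ≤ a`; for `a = 0` the `b`-subsets, each enlarged by
all points below its minimum.
-/

namespace ForbTheta

open Finset
open scoped List

section Ramsey

universe u

variable {κ : Type*}

/-- Ramsey's theorem for `r`-element subsequences with the bound `N`: if the subsequences of a list
of length at least `N` are coloured by `κ`, then for some colour `c` there is a subsequence of
length at least `n c` all of whose `r`-element subsequences have colour `c`. -/
def IsRamseyBound (r : ℕ) (n : κ → ℕ) (N : ℕ) : Prop :=
  ∀ (α : Type u) (l : List α) (f : List α → κ), N ≤ l.length →
    ∃ c l', l' <+ l ∧ n c ≤ l'.length ∧ ∀ s, s <+ l' → s.length = r → f s = c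

lemma isRamseyBound_zero [Fintype κ] (n : κ → ℕ) :
    IsRamseyBound.{u} 0 n (univ.sup n) := by
  intro α l f hl
  exact ⟨f [], l, .refl l, (le_sup (mem_univ _)).trans hl,
    fun s _ hs => by rw [List.length_eq_zero_iff.1 hs]⟩

lemma isRamseyBound_of_apply_eq_zero {r : ℕ} {n : κ → ℕ} {c : κ} (hc : n c = 0) :
    IsRamseyBound.{u} (r + 1) n 0 := by
  refine fun α l f _ => ⟨c, [], List.nil_sublist l, by simp [hc], fun s hs hr => ?_⟩
  simp [List.sublist_nil.1 hs] at hr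

lemma IsRamseyBound.succ [Fintype κ] [DecidableEq κ] {r N : ℕ} {n M : κ → ℕ}
    (hN : IsRamseyBound.{u} r (fun _ : κ => univ.sup M) N)
    (hM : ∀ c, IsRamseyBound.{u} (r + 1) (Function.update n c (n c - 1)) (M c)) :
    IsRamseyBound.{u} (r + 1) n (N + 1) := by
  rintro α (_ | ⟨v, t⟩) f hl
  · simp at hl
  obtain ⟨c, t', ht', hct', hf⟩ := hN α t (fun s => f (v :: s)) (by simpa using hl)
  obtain ⟨c', l', hl', hc', hf'⟩ := hM c α t' f ((le_sup (mem_univ c)).trans hct')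
  obtain rfl | hne := eq_or_ne c' c
  · rw [Function.update_self] at hc'
    refine ⟨c', v :: l', (hl'.trans ht').cons_cons v, by simp only [List.length_cons]; omega, ?_⟩
    intro s hs hr
    cases hs with
    | cons _ hs => exact hf' s hs hr
    | cons_cons _ hs => exact hf _ (hs.trans hl') (by simpa using hr)
  · rw [Function.update_of_ne hne] at hc'
    exact ⟨c', l', (hl'.trans ht').cons v, hc', hf'⟩

theorem exists_isRamseyBound [Finite κ] (r : ℕ) (n : κ → ℕ) : ∃ N, IsRamseyBound.{u} r n N := by
  classical
  cases nonempty_fintype κ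
  induction r generalizing n with
  | zero => exact ⟨_, isRamseyBound_zero n⟩
  | succ r ihr =>
    induction hs : ∑ c, n c using Nat.strong_induction_on generalizing n with
    | _ s ihs =>
      by_cases h0 : ∃ c, n c = 0
      · exact ⟨0, isRamseyBound_of_apply_eq_zero h0.choose_spec⟩
      push Not at h0
      have hlt (c : κ) : ∑ i, Function.update n c (n c - 1) i < s := by
        rw [← hs]
        refine sum_lt_sum (fun i _ => ?_) ⟨c, mem_univ c, ?_⟩
        · obtain rfl | hi := eq_or_ne i c <;> simp [*]
        · simpa using Nat.pos_of_ne_zero (h0 c)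
      choose M hM using fun c => ihs _ (hlt c) _ rfl
      obtain ⟨N, hN⟩ := ihr fun _ => univ.sup M
      exact ⟨_, hN.succ hM⟩

lemma exists_sublist_pairwise [Finite κ] [Nonempty κ] (n : ℕ) :
    ∃ N, ∀ {α : Type u} (R : κ → α → α → Prop) (l : List α), N ≤ l.length →
      l.Pairwise (fun x y => ∃ c, R c x y) →
      ∃ c l', l' <+ l ∧ n ≤ l'.length ∧ l'.Pairwise (R c) := by
  classical
  obtain ⟨N, hN⟩ := exists_isRamseyBound.{u} 2 fun _ : κ => n
  refine ⟨N, fun {α} R l hl hR => ?_⟩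
  have hcolour (s : List α) : ∃ c, ∀ x y, s = [x, y] → s <+ l → R c x y := by
    by_cases hs : ∃ x y, s = [x, y] ∧ s <+ l
    · obtain ⟨x, y, rfl, hsl⟩ := hs
      obtain ⟨c, hc⟩ := List.pairwise_iff_forall_sublist.1 hR hsl
      exact ⟨c, by simp [hc]⟩
    · exact ⟨Classical.arbitrary κ, fun x y h h' => (hs ⟨x, y, h, h'⟩).elim⟩
  choose f hf using hcolour
  obtain ⟨c, l', hl', hn, hc⟩ := hN α l f hl
  refine ⟨c, l', hl', hn, List.pairwise_iff_forall_sublist.2 fun {x y} hs => ?_⟩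
  rw [← hc _ hs rfl]
  exact hf _ x y rfl (hs.trans hl')

end Ramsey

section SetSystem

variable {ι : Type*} {𝓐 : Finset (Finset ι)} {U A B C : Finset ι} {a k s : ℕ}

lemma card_filter_powerset_card_le (U : Finset ι) (t : ℕ) :
    #{S ∈ U.powerset | #S ≤ t} ≤ (#U + 1) ^ t := by
  calc #{S ∈ U.powerset | #S ≤ t}
      = ∑ i ∈ range (t + 1), #{S ∈ {S ∈ U.powerset | #S ≤ t} | #S = i} :=
        card_eq_sum_card_fiberwise fun S hS => by
          simpa using Nat.lt_succ_of_le (mem_filter.1 hS).2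
    _ ≤ ∑ i ∈ range (t + 1), #(U.powersetCard i) :=
        sum_le_sum fun i _ => card_le_card fun S hS => by
          simp only [mem_filter, mem_powerset] at hS
          exact mem_powersetCard.2 ⟨hS.1.1, hS.2⟩
    _ ≤ ∑ i ∈ range (t + 1), #U ^ i * 1 ^ (t - i) * t.choose i := by
        refine sum_le_sum fun i hi => ?_
        rw [card_powersetCard, one_pow, mul_one]
        exact (Nat.choose_le_pow _ _).trans
          (Nat.le_mul_of_pos_right _ (Nat.choose_pos (mem_range_succ_iff.1 hi)))
    _ = (#U + 1) ^ t := by rw [add_pow]; rfl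

variable [DecidableEq ι]

lemma card_symmDiff_add_two_mul_card_inter (A B : Finset ι) :
    #(symmDiff A B) + 2 * #(A ∩ B) = #A + #B := by
  rw [symmDiff_def, sup_eq_union, card_union_of_disjoint disjoint_sdiff_sdiff,
    ← card_sdiff_add_card_inter A B, ← card_sdiff_add_card_inter B A, inter_comm B A]
  ring

lemma two_mul_card_symmDiff_sdiff_le (hB : #(symmDiff A B) ≤ #(symmDiff B C))
    (hC : #(symmDiff A C) ≤ #(symmDiff B C)) :
    2 * #(symmDiff A B \ symmDiff B C) ≤ #(symmDiff B C) := by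
  have hAC : symmDiff (symmDiff A B) (symmDiff B C) = symmDiff A C := by
    rw [symmDiff_assoc, symmDiff_symmDiff_cancel_left]
  have hcard := card_symmDiff_add_two_mul_card_inter (symmDiff A B) (symmDiff B C)
  rw [hAC] at hcard
  have := card_symmDiff_add_two_mul_card_inter A B
  have := card_sdiff_add_card_inter (symmDiff A B) (symmDiff B C)
  omega

/- If `A₁, A₂ ∈ 𝓐` are at maximal distance and `Y = symmDiff A₁ A₂`, then at least half of every
`symmDiff A A₁` lies in `Y`. -/
theorem card_le_of_card_symmDiff_le (hU : ∀ A ∈ 𝓐, A ⊆ U)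
    (h : ∀ A ∈ 𝓐, ∀ B ∈ 𝓐, #(symmDiff A B) ≤ 2 * s) : #𝓐 ≤ 4 ^ s * (#U + 1) ^ s := by
  obtain rfl | hne := 𝓐.eq_empty_or_nonempty
  · simp
  obtain ⟨⟨A₁, A₂⟩, h₁₂, hmax⟩ :=
    exists_max_image (𝓐 ×ˢ 𝓐) (fun p => #(symmDiff p.1 p.2)) (hne.product hne)
  simp only [mem_product, Prod.forall, and_imp] at h₁₂ hmax
  set Y := symmDiff A₁ A₂
  have hdiff (A) (hA : A ∈ 𝓐) : #(symmDiff A A₁ \ Y) ≤ s := by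
    have hY : 2 * #(symmDiff A A₁ \ Y) ≤ #Y :=
      two_mul_card_symmDiff_sdiff_le (hmax A A₁ hA h₁₂.1) (hmax A A₂ hA h₁₂.2)
    have hs : #Y ≤ 2 * s := h A₁ h₁₂.1 A₂ h₁₂.2
    omega
  have hmaps : Set.MapsTo (fun A => (symmDiff A A₁ ∩ Y, symmDiff A A₁ \ Y)) 𝓐
      (Y.powerset ×ˢ {S ∈ U.powerset | #S ≤ s} : Finset _) := fun A hA => by
    simp only [coe_product, Set.mem_prod, mem_coe, mem_powerset, inter_subset_right, mem_filter,
      true_and]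
    exact ⟨sdiff_subset.trans (symmDiff_le_sup.trans (union_subset (hU A hA) (hU _ h₁₂.1))),
      hdiff A hA⟩
  have hinj : Set.InjOn (fun A => (symmDiff A A₁ ∩ Y, symmDiff A A₁ \ Y)) 𝓐 := by
    intro A _ B _ hAB
    simp only [Prod.mk.injEq] at hAB
    have : symmDiff A A₁ = symmDiff B A₁ := by
      rw [← sdiff_union_inter (symmDiff A A₁) Y, ← sdiff_union_inter (symmDiff B A₁) Y, hAB.1,
        hAB.2]
    exact symmDiff_left_injective _ this
  calc #𝓐 ≤ 2 ^ #Y * #{S ∈ U.powerset | #S ≤ s} := by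
        rw [← card_powerset, ← card_product]
        exact card_le_card_of_injOn _ hmaps hinj
    _ ≤ 2 ^ (2 * s) * (#U + 1) ^ s :=
        Nat.mul_le_mul (Nat.pow_le_pow_right two_pos (h _ h₁₂.1 _ h₁₂.2))
          (card_filter_powerset_card_le U s)
    _ = 4 ^ s * (#U + 1) ^ s := by rw [pow_mul]; rfl

lemma card_symmDiff_eq_two_mul_card_sdiff (h : #A = #B) : #(symmDiff A B) = 2 * #(A \ B) := by
  rw [symmDiff_def, sup_eq_union, card_union_of_disjoint disjoint_sdiff_sdiff,
    card_sdiff_comm h.symm, two_mul]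

lemma card_le_of_card_sdiff_le (hU : ∀ A ∈ 𝓐, A ⊆ U) (hk : ∀ A ∈ 𝓐, #A = k)
    (h : ∀ A ∈ 𝓐, ∀ B ∈ 𝓐, #(A \ B) ≤ s) : #𝓐 ≤ 4 ^ s * (#U + 1) ^ s :=
  card_le_of_card_symmDiff_le hU fun A hA B hB => by
    rw [card_symmDiff_eq_two_mul_card_sdiff ((hk A hA).trans (hk B hB).symm)]
    exact Nat.mul_le_mul_left 2 (h A hA B hB)

lemma card_le_mul_card_pow_of_card_sdiff_le (hne : U.Nonempty) (hU : ∀ A ∈ 𝓐, A ⊆ U)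
    (hk : ∀ A ∈ 𝓐, #A = k) (h : ∀ A ∈ 𝓐, ∀ B ∈ 𝓐, #(A \ B) ≤ s) : #𝓐 ≤ 8 ^ s * #U ^ s :=
  calc #𝓐 ≤ 4 ^ s * (#U + 1) ^ s := card_le_of_card_sdiff_le hU hk h
    _ ≤ 4 ^ s * (2 * #U) ^ s := by
        have := card_pos.2 hne
        gcongr
        omega
    _ = 8 ^ s * #U ^ s := by rw [mul_pow, ← mul_assoc, ← mul_pow]; rfl

lemma inter_nonempty_of_card_sdiff_le (hA : #(B \ A) ≤ s) (hC : #(B \ C) ≤ s) (hB : 2 * s < #B) :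
    (A ∩ C).Nonempty := by
  by_contra hne
  have hsub : B ⊆ B \ A ∪ B \ C := fun x hx => by
    by_contra hx'
    exact hne ⟨x, by simpa [hx] using hx'⟩
  have := (card_le_card hsub).trans (card_union_le _ _)
  omega

/- Meeting is an equivalence relation on `𝓐`, and the unions of its classes are disjoint. -/
theorem card_le_of_inter_nonempty_imp (hs : s ≠ 0) (hsk : 2 * s < k) (hU : ∀ A ∈ 𝓐, A ⊆ U)
    (hk : ∀ A ∈ 𝓐, #A = k) (h : ∀ A ∈ 𝓐, ∀ B ∈ 𝓐, (A ∩ B).Nonempty → #(A \ B) ≤ s) :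
    #𝓐 ≤ 8 ^ s * #U ^ s := by
  induction 𝓐 using Finset.strongInduction generalizing U with
  | H 𝓐 ih =>
  obtain rfl | ⟨A₀, hA₀⟩ := 𝓐.eq_empty_or_nonempty
  · simp
  have htrans : ∀ A ∈ 𝓐, ∀ B ∈ 𝓐, ∀ C ∈ 𝓐, (B ∩ A).Nonempty → (B ∩ C).Nonempty →
      (A ∩ C).Nonempty := fun A hA B hB C hC hBA hBC =>
    inter_nonempty_of_card_sdiff_le (h B hB A hA hBA) (h B hB C hC hBC) (by rwa [hk B hB])
  set 𝓑 := {B ∈ 𝓐 | (A₀ ∩ B).Nonempty} with h𝓑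
  set V := 𝓑.biUnion id
  have hA₀ne : A₀.Nonempty := card_pos.1 (by rw [hk A₀ hA₀]; omega)
  have hA₀V : A₀ ⊆ V := subset_biUnion_of_mem id (by simpa [h𝓑, hA₀] using hA₀ne)
  have hVU : V ⊆ U := biUnion_subset.2 fun B hB => hU B (filter_subset _ _ hB)
  have hcard𝓑 : #𝓑 ≤ 8 ^ s * #V ^ s := by
    refine card_le_mul_card_pow_of_card_sdiff_le (hA₀ne.mono hA₀V)
      (fun B hB => subset_biUnion_of_mem id hB) (fun B hB => hk B (filter_subset _ _ hB))
      fun B hB B' hB' => ?_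
    rw [h𝓑, mem_filter] at hB hB'
    exact h B hB.1 B' hB'.1 (htrans B hB.1 A₀ hA₀ B' hB'.1 hB.2 hB'.2)
  have hrest : #(𝓐 \ 𝓑) ≤ 8 ^ s * #(U \ V) ^ s := by
    refine ih _ (sdiff_ssubset (filter_subset _ _) ⟨A₀, by simpa [h𝓑, hA₀] using hA₀ne⟩)
      (fun A hA => ?_) (fun A hA => hk A (sdiff_subset hA))
      fun A hA B hB => h A (sdiff_subset hA) B (sdiff_subset hB)
    obtain ⟨hA, hA𝓑⟩ := mem_sdiff.1 hA
    refine subset_sdiff.2 ⟨hU A hA, (disjoint_biUnion_right _ _ _).2 fun B hB => ?_⟩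
    rw [h𝓑, mem_filter] at hB
    refine disjoint_iff_inter_eq_empty.2 (not_nonempty_iff_eq_empty.1 fun hAB => hA𝓑 ?_)
    rw [id, inter_comm] at hAB
    exact mem_filter.2 ⟨hA, htrans A₀ hA₀ B hB.1 A hA (inter_comm A₀ B ▸ hB.2) hAB⟩
  calc #𝓐 = #(𝓐 \ 𝓑) + #𝓑 := (card_sdiff_add_card_eq_card (filter_subset _ _)).symm
    _ ≤ 8 ^ s * (#(U \ V) ^ s + #V ^ s) := by rw [mul_add]; exact add_le_add hrest hcard𝓑
    _ ≤ 8 ^ s * (#(U \ V) + #V) ^ s :=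
        Nat.mul_le_mul_left _ (pow_add_pow_le (Nat.zero_le _) (Nat.zero_le _) hs)
    _ = 8 ^ s * #U ^ s := by rw [card_sdiff_add_card_eq_card hVU]

lemma card_mul_choose_le (hU : ∀ A ∈ 𝓐, A ⊆ U) (hk : ∀ A ∈ 𝓐, #A = k)
    (h : ∀ A ∈ 𝓐, ∀ B ∈ 𝓐, a ≤ #(A ∩ B) → #(A \ B) ≤ s) :
    #𝓐 * k.choose a ≤ 4 ^ s * (#U + 1) ^ (a + s) := by
  have hT (T) (hT : T ∈ U.powersetCard a) : #{A ∈ 𝓐 | T ⊆ A} ≤ 4 ^ s * (#U + 1) ^ s := by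
    refine card_le_of_card_sdiff_le (fun A hA => hU A (filter_subset _ _ hA))
      (fun A hA => hk A (filter_subset _ _ hA)) fun A hA B hB => ?_
    rw [mem_filter] at hA hB
    refine h A hA.1 B hB.1 ?_
    rw [← (mem_powersetCard.1 hT).2]
    exact card_le_card (subset_inter hA.2 hB.2)
  have hA (A) (hA : A ∈ 𝓐) : {T ∈ U.powersetCard a | T ⊆ A} = A.powersetCard a := by
    ext T
    simp only [mem_filter, mem_powersetCard]
    exact ⟨fun hT => ⟨hT.2, hT.1.2⟩, fun hT => ⟨⟨hT.1.trans (hU A hA), hT.2⟩, hT.1⟩⟩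
  calc #𝓐 * k.choose a = ∑ A ∈ 𝓐, #{T ∈ U.powersetCard a | T ⊆ A} := by
        rw [← smul_eq_mul, ← sum_const]
        exact sum_congr rfl fun A hA' => by rw [hA A hA', card_powersetCard, hk A hA']
    _ = ∑ T ∈ U.powersetCard a, #{A ∈ 𝓐 | T ⊆ A} :=
        sum_card_bipartiteAbove_eq_sum_card_bipartiteBelow fun A T : Finset ι => T ⊆ A
    _ ≤ #(U.powersetCard a) * (4 ^ s * (#U + 1) ^ s) :=
        (sum_le_card_nsmul _ _ _ hT).trans_eq (smul_eq_mul _ _)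
    _ ≤ (#U + 1) ^ a * (4 ^ s * (#U + 1) ^ s) := by
        rw [card_powersetCard]
        gcongr
        exact (Nat.choose_le_pow _ _).trans (Nat.pow_le_pow_left (Nat.le_succ _) a)
    _ = 4 ^ s * (#U + 1) ^ (a + s) := by rw [pow_add, mul_left_comm]

lemma card_le_of_uniform (hU : ∀ A ∈ 𝓐, A ⊆ U) (hk : ∀ A ∈ 𝓐, #A = k)
    (h : ∀ A ∈ 𝓐, ∀ B ∈ 𝓐, a ≤ #(A ∩ B) → #(A \ B) ≤ s) :
    #𝓐 ≤ 4 ^ s * (#U + 1) ^ (a + s) := by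
  obtain hak | hka := le_or_gt a k
  · exact (Nat.le_mul_of_pos_right _ (Nat.choose_pos hak)).trans (card_mul_choose_le hU hk h)
  calc #𝓐 ≤ #(U.powersetCard k) :=
        card_le_card fun A hA => mem_powersetCard.2 ⟨hU A hA, hk A hA⟩
    _ ≤ (#U + 1) ^ k := by
        rw [card_powersetCard]
        exact (Nat.choose_le_pow _ _).trans (Nat.pow_le_pow_left (Nat.le_succ _) k)
    _ ≤ (#U + 1) ^ (a + s) := Nat.pow_le_pow_right (Nat.succ_pos _) (by omega)
    _ ≤ 4 ^ s * (#U + 1) ^ (a + s) := Nat.le_mul_of_pos_left _ (by positivity)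

lemma succ_sq_le_mul_choose (ha : 2 ≤ a) (hak : a ≤ k) :
    (k + 1) ^ 2 ≤ (a + 1) ^ 2 * k.choose a := by
  induction k, hak using Nat.le_induction with
  | base => simp
  | succ k hak ih =>
    refine Nat.le_of_mul_le_mul_right ?_ (by omega : 0 < k - 1)
    calc (k + 1 + 1) ^ 2 * (k - 1) ≤ (k + 1) ^ 2 * (k + 1) := by
          obtain ⟨j, rfl⟩ := Nat.exists_eq_add_of_le' (by omega : 1 ≤ k)
          rw [Nat.add_sub_cancel]
          nlinarith
      _ ≤ (a + 1) ^ 2 * k.choose a * (k + 1) := by gcongr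
      _ = (a + 1) ^ 2 * (k + 1).choose a * (k + 1 - a) := by
          rw [mul_assoc, Nat.choose_mul_succ_eq, mul_assoc]
      _ ≤ (a + 1) ^ 2 * (k + 1).choose a * (k - 1) := Nat.mul_le_mul_left _ (by omega)

/-- The constant in the bound on the size of a `k`-uniform family any two of whose members that
share `a` points differ in at most `s` points. -/
def levelConst (a s : ℕ) : ℕ := 8 ^ s * ((a + 1) ^ 2 + (2 * s + 1) ^ 2)

lemma card_mul_min_le (ha : 1 ≤ a) (hs : s ≠ 0) (hU : ∀ A ∈ 𝓐, A ⊆ U)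
    (hk : ∀ A ∈ 𝓐, #A = k) (h : ∀ A ∈ 𝓐, ∀ B ∈ 𝓐, a ≤ #(A ∩ B) → #(A \ B) ≤ s) :
    #𝓐 * min (#U + 1) ((k + 1) ^ 2) ≤ levelConst a s * (#U + 1) ^ (a + s) := by
  rw [← Nat.mul_min_mul_left, min_le_iff]
  have h48 : 4 ^ s ≤ 8 ^ s := Nat.pow_le_pow_left (by norm_num) s
  obtain hsmall | ⟨hak, hsk⟩ : (k < a ∨ k ≤ 2 * s) ∨ a ≤ k ∧ 2 * s < k := by omega
  · right
    calc #𝓐 * (k + 1) ^ 2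
        ≤ 4 ^ s * (#U + 1) ^ (a + s) * ((a + 1) ^ 2 + (2 * s + 1) ^ 2) := by
          refine Nat.mul_le_mul (card_le_of_uniform hU hk h) ?_
          rcases hsmall with hka | hks
          · exact (Nat.pow_le_pow_left (by omega) 2).trans (Nat.le_add_right _ _)
          · exact (Nat.pow_le_pow_left (by omega) 2).trans (Nat.le_add_left _ _)
      _ ≤ 8 ^ s * (#U + 1) ^ (a + s) * ((a + 1) ^ 2 + (2 * s + 1) ^ 2) := by gcongr
      _ = levelConst a s * (#U + 1) ^ (a + s) := by rw [levelConst]; ring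
  obtain rfl | ha2 : a = 1 ∨ 2 ≤ a := by omega
  · left
    calc #𝓐 * (#U + 1) ≤ 8 ^ s * #U ^ s * (#U + 1) := by
          gcongr
          exact card_le_of_inter_nonempty_imp hs hsk hU hk fun A hA B hB hAB =>
            h A hA B hB (card_pos.2 hAB)
      _ ≤ 8 ^ s * (#U + 1) ^ s * (#U + 1) := by gcongr; omega
      _ = 8 ^ s * 1 * (#U + 1) ^ (1 + s) := by ring
      _ ≤ levelConst 1 s * (#U + 1) ^ (1 + s) := by
          rw [levelConst]
          gcongr
          omega
  · right
    calc #𝓐 * (k + 1) ^ 2 ≤ #𝓐 * ((a + 1) ^ 2 * k.choose a) := by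
          gcongr
          exact succ_sq_le_mul_choose ha2 hak
      _ = (a + 1) ^ 2 * (#𝓐 * k.choose a) := by ring
      _ ≤ (a + 1) ^ 2 * (4 ^ s * (#U + 1) ^ (a + s)) := by
          exact Nat.mul_le_mul_left _ (card_mul_choose_le hU hk h)
      _ ≤ (a + 1) ^ 2 * (8 ^ s * (#U + 1) ^ (a + s)) := by gcongr
      _ = 8 ^ s * (a + 1) ^ 2 * (#U + 1) ^ (a + s) := by ring
      _ ≤ levelConst a s * (#U + 1) ^ (a + s) := by
          rw [levelConst]
          gcongr
          omega

lemma sum_range_le_of_mul_min_le {β : ℕ → ℕ} {n P : ℕ}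
    (h : ∀ k < n, β k * min n ((k + 1) ^ 2) ≤ P) : ∑ k ∈ range n, β k ≤ 3 * P := by
  simp only [← Nat.mul_min_mul_left, min_le_iff] at h
  have hβ (k) (hk : k ∈ range n) : (β k : ℝ) ≤ P * ((n : ℝ)⁻¹ + (((k + 1 : ℕ) : ℝ) ^ 2)⁻¹) := by
    have hn : (0 : ℝ) < n := by exact_mod_cast (Nat.zero_le k).trans_lt (mem_range.1 hk)
    rw [mul_add, ← div_eq_mul_inv, ← div_eq_mul_inv]
    rcases h k (mem_range.1 hk) with h | h
    · exact ((le_div_iff₀ hn).2 (by exact_mod_cast h)).trans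
        (le_add_of_nonneg_right (by positivity))
    · exact ((le_div_iff₀ (by positivity)).2 (by exact_mod_cast h)).trans
        (le_add_of_nonneg_left (by positivity))
  have hsq : ∑ k ∈ range n, (((k + 1 : ℕ) : ℝ) ^ 2)⁻¹ ≤ 2 := by
    have := sum_Ioo_inv_sq_le (α := ℝ) 0 (n + 1)
    rw [← Ico_add_one_left_eq_Ioo] at this
    rw [range_eq_Ico, sum_Ico_add' (fun k : ℕ => ((k : ℝ) ^ 2)⁻¹)]
    simpa using this
  have hinv : (n : ℝ) * (n : ℝ)⁻¹ ≤ 1 := mul_inv_le_one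
  have : (∑ k ∈ range n, β k : ℝ) ≤ P * 3 :=
    calc (∑ k ∈ range n, β k : ℝ)
        ≤ P * (n * (n : ℝ)⁻¹ + ∑ k ∈ range n, (((k + 1 : ℕ) : ℝ) ^ 2)⁻¹) := by
          refine (sum_le_sum hβ).trans_eq ?_
          rw [← mul_sum, sum_add_distrib, sum_const, card_range, nsmul_eq_mul]
      _ ≤ P * 3 := by gcongr; linarith
  rw [mul_comm]
  exact_mod_cast this

end SetSystem

section PairCount

variable {ι σ : Type*} [Fintype ι] [DecidableEq σ]

/-- The number of coordinates at which `x` takes the value `u` and `y` takes the value `v`, that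
is, of rows `[u v]` of the two-column matrix `[x y]`. -/
def pairCount (x y : ι → σ) (u v : σ) : ℕ := #{r | x r = u ∧ y r = v}

lemma pairCount_comm (x y : ι → σ) (u v : σ) : pairCount x y u v = pairCount y x v u := by
  simp only [pairCount, and_comm]

lemma exists_injective_comp_eq {α β τ : Type*} [Fintype α] [Fintype β] [DecidableEq τ]
    {t : α → τ} {T : β → τ} (h : ∀ z, #{i | t i = z} ≤ #{j | T j = z}) :
    ∃ f : α → β, Function.Injective f ∧ T ∘ f = t := by
  have hemb (z : τ) : Nonempty ({i // t i = z} ↪ {j // T j = z}) :=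
    Function.Embedding.nonempty_of_card_le (by simpa only [Fintype.card_subtype] using h z)
  let e (z : τ) := (hemb z).some
  refine ⟨Equiv.sigmaFiberEquiv T ∘ Sigma.map id (fun z => e z) ∘ (Equiv.sigmaFiberEquiv t).symm,
    (Equiv.injective _).comp ((Function.injective_id.sigma_map fun z => (e z).injective).comp
      (Equiv.injective _)), funext fun i => (e (t i) ⟨i, rfl⟩).2⟩

lemma isConfig_iff_exists_pairCount_le {k m n : ℕ} {F : MatN k 2} {A : MatN m n} :
    IsConfig F A ↔ ∃ j j', j ≠ j' ∧ ∀ u v,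
      pairCount (F · 0) (F · 1) u v ≤ pairCount (A · j) (A · j') u v := by
  constructor
  · rintro ⟨f, g, hf, hg, hA⟩
    refine ⟨g 0, g 1, hg.ne (by decide), fun u v => ?_⟩
    refine card_le_card_of_injOn f (fun i hi => ?_) hf.injOn
    simpa [hA] using hi
  · rintro ⟨j, j', hj, h⟩
    obtain ⟨f, hf, hfA⟩ := exists_injective_comp_eq (t := fun i => (F i 0, F i 1))
      (T := fun i => (A i j, A i j'))
      fun z => by simpa only [pairCount, Prod.ext_iff] using h z.1 z.2
    refine ⟨f, ![j, j'], hf, ?_, fun i => ?_⟩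
    · intro p q
      fin_cases p <;> fin_cases q <;> simp [hj, hj.symm]
    · have := congrFun hfA i
      simp only [Function.comp_apply, Prod.mk.injEq] at this
      simpa [Fin.forall_fin_two] using this

lemma pairCount_Fabcd (a b c d u v : ℕ) :
    pairCount (Fabcd a b c d · 0) (Fabcd a b c d · 1) u v =
      (if 1 = u ∧ 1 = v then a else 0) + (if 1 = u ∧ 0 = v then b else 0) +
        (if 0 = u ∧ 1 = v then c else 0) + if 0 = u ∧ 0 = v then d else 0 := by
  rw [pairCount, card_filter, Fin.sum_univ_add, Fin.sum_univ_add, Fin.sum_univ_add]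
  simp [Fabcd, add_assoc]

lemma isConfig_Fabcd_iff {a b c d m n : ℕ} {A : MatN m n} :
    IsConfig (Fabcd a b c d) A ↔ ∃ j j', j ≠ j' ∧
      a ≤ pairCount (A · j) (A · j') 1 1 ∧ b ≤ pairCount (A · j) (A · j') 1 0 ∧
      c ≤ pairCount (A · j) (A · j') 0 1 ∧ d ≤ pairCount (A · j) (A · j') 0 0 := by
  rw [isConfig_iff_exists_pairCount_le]
  simp only [pairCount_Fabcd]
  refine exists₂_congr fun j j' => and_congr_right fun _ => ⟨fun h => ?_, ?_⟩
  · exact ⟨by simpa using h 1 1, by simpa using h 1 0, by simpa using h 0 1, by simpa using h 0 0⟩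
  · rintro ⟨h₁₁, h₁₀, h₀₁, h₀₀⟩ (_ | _ | u) (_ | _ | v) <;> simp [*]

end PairCount

section Column

universe u

variable {ι : Type u} [Fintype ι] {C : Set (ι → Fin 3)} {x y : ι → Fin 3} {ℓ a b n N : ℕ}
  {u v : Fin 3}

/-- The column sets of the matrices over `{0, 1, 2}` that avoid `F_{a,b,b,a}` and every member of
`𝒯_ℓ(3) \ 𝒯_ℓ(2)`. Distinctness of the rows and columns of a copy of `I_ℓ(u, v)` or `T_ℓ(u, v)` is
implied by `u ≠ v`. -/
structure Admissible (ℓ a b : ℕ) (C : Set (ι → Fin 3)) : Prop where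
  not_pairCount : ∀ x ∈ C, ∀ y ∈ C, ¬(a ≤ pairCount x y 1 1 ∧ b ≤ pairCount x y 1 0 ∧
    b ≤ pairCount x y 0 1 ∧ a ≤ pairCount x y 0 0)
  not_diagonal : ∀ u v : Fin 3, u ≠ v → u = 2 ∨ v = 2 → ∀ (ρ : Fin ℓ → ι) (c : Fin ℓ → ι → Fin 3),
    (∀ j, c j ∈ C) → ¬∀ i j, c j (ρ i) = if i = j then u else v
  not_triangular : ∀ u v : Fin 3, u ≠ v → u = 2 ∨ v = 2 → ∀ (ρ : Fin ℓ → ι)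
    (c : Fin ℓ → ι → Fin 3), (∀ j, c j ∈ C) → ¬∀ i j, c j (ρ i) = if j < i then u else v

lemma Admissible.mono_left {a' : ℕ} (h : Admissible ℓ a b C) (ha : a ≤ a') :
    Admissible ℓ a' b C where
  not_pairCount x hx y hy hxy :=
    h.not_pairCount x hx y hy ⟨ha.trans hxy.1, hxy.2.1, hxy.2.2.1, ha.trans hxy.2.2.2⟩
  not_diagonal := h.not_diagonal
  not_triangular := h.not_triangular

lemma pairCount_perm_comp (e : Equiv.Perm (Fin 3)) (x y : ι → Fin 3) (u v : Fin 3) :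
    pairCount (e ∘ x) (e ∘ y) (e u) (e v) = pairCount x y u v := by
  simp only [pairCount, Function.comp_apply, e.apply_eq_iff_eq]

lemma pairCount_swap_comp (x y : ι → Fin 3) (u v : Fin 3) :
    pairCount (Equiv.swap 0 1 ∘ x) (Equiv.swap 0 1 ∘ y) u v =
      pairCount x y (Equiv.swap 0 1 u) (Equiv.swap 0 1 v) := by
  rw [← pairCount_perm_comp (Equiv.swap 0 1) x y, Equiv.swap_apply_self, Equiv.swap_apply_self]

lemma eq_swap_of_swap_eq_ite {p : Prop} [Decidable p] {w : Fin 3}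
    (h : Equiv.swap 0 1 w = if p then u else v) :
    w = if p then Equiv.swap 0 1 u else Equiv.swap 0 1 v := by
  rw [← Equiv.swap_apply_self 0 1 w, h, apply_ite (Equiv.swap 0 1)]

lemma Admissible.image_swap (h : Admissible ℓ a b C) :
    Admissible ℓ a b ((Equiv.swap 0 1 ∘ ·) '' C) where
  not_pairCount := by
    rintro _ ⟨x, hx, rfl⟩ _ ⟨y, hy, rfl⟩ ⟨h₁₁, h₁₀, h₀₁, h₀₀⟩
    simp only [pairCount_swap_comp, Equiv.swap_apply_left, Equiv.swap_apply_right]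
      at h₁₁ h₁₀ h₀₁ h₀₀
    exact h.not_pairCount x hx y hy ⟨h₀₀, h₀₁, h₁₀, h₁₁⟩
  not_diagonal u v huv h2 ρ c hc hM := by
    choose c' hc' hcc' using hc
    refine h.not_diagonal _ _ ((Equiv.swap 0 1).injective.ne huv) ?_ ρ c' hc' fun i j =>
      eq_swap_of_swap_eq_ite (by rw [← hM i j, ← hcc' j]; rfl)
    exact h2.imp (fun h => by rw [h]; rfl) fun h => by rw [h]; rfl
  not_triangular u v huv h2 ρ c hc hM := by
    choose c' hc' hcc' using hc
    refine h.not_triangular _ _ ((Equiv.swap 0 1).injective.ne huv) ?_ ρ c' hc' fun i j =>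
      eq_swap_of_swap_eq_ite (by rw [← hM i j, ← hcc' j]; rfl)
    exact h2.imp (fun h => by rw [h]; rfl) fun h => by rw [h]; rfl

/-- A sequence of `n` columns `x i` and, for every pair `i < j`, a row `γ i j` in which `x i` has a
`1` and `x j` has a `2`, such that the entry of a third column in that row depends only on whether
the column comes before (`e₁`), between (`e₂`) or after (`e₃`) the pair. -/
structure IsHomogeneous (n : ℕ) (x : ℕ → ι → Fin 3) (γ : ℕ → ℕ → ι) (e₁ e₂ e₃ : Fin 3) :
    Prop where
  one : ∀ i j, i < j → j < n → x i (γ i j) = 1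
  two : ∀ i j, i < j → j < n → x j (γ i j) = 2
  before : ∀ p q r, p < q → q < r → r < n → x p (γ q r) = e₁
  between : ∀ p q r, p < q → q < r → r < n → x q (γ p r) = e₂
  after : ∀ p q r, p < q → q < r → r < n → x r (γ p q) = e₃

/-- The relation "`x` lies well above `y`": each of the rows `[1 1]`, `[1 0]` and `[0 0]` occurs at
least `N` times in `[x y]`. -/
structure IsTower (N : ℕ) (x y : ι → Fin 3) : Prop where
  one_one : N ≤ pairCount x y 1 1
  one_zero : N ≤ pairCount x y 1 0
  zero_zero : N ≤ pairCount x y 0 0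

lemma isTower_swap_comp :
    IsTower N (Equiv.swap 0 1 ∘ x) (Equiv.swap 0 1 ∘ y) ↔ IsTower N y x := by
  have h (u v) := (pairCount_swap_comp x y u v).trans (pairCount_comm x y _ _)
  exact ⟨fun hT => ⟨hT.zero_zero.trans_eq (h 0 0), hT.one_zero.trans_eq (h 1 0),
    hT.one_one.trans_eq (h 1 1)⟩, fun hT => ⟨hT.zero_zero.trans_eq (h 1 1).symm,
    hT.one_zero.trans_eq (h 1 0).symm, hT.one_one.trans_eq (h 0 0).symm⟩⟩

lemma IsTower.pairCount_zero_one_lt (hC : Admissible ℓ a b C) (hx : x ∈ C) (hy : y ∈ C)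
    (h : IsTower (a + b) x y) : pairCount x y 0 1 < b := by
  by_contra! h₀₁
  exact hC.not_pairCount x hx y hy ⟨(Nat.le_add_right a b).trans h.one_one,
    (Nat.le_add_left b a).trans h.one_zero, h₀₁, (Nat.le_add_right a b).trans h.zero_zero⟩

lemma le_pairCount_of_injOn {f : ℕ → ι} {s t : ℕ} (hN : s + N < t) (hf : Set.InjOn f (Ioo s t))
    (h : ∀ q, s < q → q < t → x (f q) = u ∧ y (f q) = v) : N ≤ pairCount x y u v := by
  have hcard : #(Ioo s t) ≤ pairCount x y u v :=
    card_le_card_of_injOn f (fun q hq => by simpa using h q (by simp_all) (by simp_all)) hf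
  rw [Nat.card_Ioo] at hcard
  omega

namespace IsHomogeneous

variable {x : ℕ → ι → Fin 3} {γ : ℕ → ℕ → ι} {e₁ e₂ e₃ : Fin 3}

lemma injOn {ι : Type*} {x : ℕ → ι → Fin 3} {γ : ℕ → ℕ → ι} (h : IsHomogeneous n x γ e₁ e₂ e₃)
    (h₂ : e₂ ≠ 2) (p : ℕ) : Set.InjOn (γ p) (Set.Ioo p n) := by
  intro q hq q' hq' hγ
  by_contra hne
  wlog hlt : q < q' generalizing q q'
  · exact this hq' hq hγ.symm (Ne.symm hne) (by omega)
  exact h₂ ((h.between p q q' hq.1 hlt hq'.2).symm.trans (hγ ▸ h.two p q hq.1 hq.2))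

lemma ne_two_of_ne (h : IsHomogeneous n x γ e₁ e₂ e₃) (hC : Admissible ℓ a b C)
    (hx : ∀ i < n, x i ∈ C) (hn : 2 * ℓ + 4 ≤ n) (hne : e₂ ≠ e₃) : e₂ ≠ 2 ∧ e₃ ≠ 2 := by
  by_contra h2
  refine hC.not_triangular e₂ e₃ hne (by tauto) (fun i => γ 0 (2 * i + 1)) (fun j => x (2 * j + 2))
    (fun j => hx _ (by omega)) fun i j => ?_
  split_ifs with hji
  · exact h.between _ _ _ (by omega) (by omega) (by omega)
  · exact h.after _ _ _ (by omega) (by omega) (by omega)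

lemma between_ne_after (h : IsHomogeneous n x γ e₁ e₂ e₃) (hC : Admissible ℓ a b C)
    (hx : ∀ i < n, x i ∈ C) (hn : 2 * ℓ + 4 ≤ n) : e₂ ≠ e₃ := by
  rintro rfl
  obtain rfl | h₂ := eq_or_ne e₂ 2
  · obtain rfl | h₁ := eq_or_ne e₁ 2
    · refine hC.not_diagonal 1 2 (by decide) (.inr rfl) (fun i => γ i (n - 1)) (fun j => x j)
        (fun j => hx _ (by omega)) fun i j => ?_
      obtain hij | rfl | hij := lt_trichotomy i j
      · rw [if_neg hij.ne]
        exact h.between _ _ _ hij (by omega) (by omega)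
      · rw [if_pos rfl]
        exact h.one _ _ (by omega) (by omega)
      · rw [if_neg hij.ne']
        exact h.before _ _ _ hij (by omega) (by omega)
    · refine hC.not_triangular e₁ 2 h₁ (.inr rfl) (fun i => γ (2 * i + 1) (n - 1))
        (fun j => x (2 * j + 2)) (fun j => hx _ (by omega)) fun i j => ?_
      split_ifs with hji
      · exact h.before _ _ _ (by omega) (by omega) (by omega)
      · exact h.between _ _ _ (by omega) (by omega) (by omega)
  · refine hC.not_diagonal 2 e₂ h₂.symm (.inl rfl) (fun i => γ 0 (i + 1)) (fun j => x (j + 1))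
      (fun j => hx _ (by omega)) fun i j => ?_
    obtain hij | rfl | hij := lt_trichotomy i j
    · rw [if_neg hij.ne]
      exact h.after _ _ _ (by omega) (by omega) (by omega)
    · rw [if_pos rfl]
      exact h.two _ _ (by omega) (by omega)
    · rw [if_neg hij.ne']
      exact h.between _ _ _ (by omega) (by omega) (by omega)

lemma isTower (h : IsHomogeneous n x γ e₁ 1 0) (hn : 3 * N + 3 ≤ n) :
    IsTower N (x (N + 1)) (x (2 * N + 2)) := by
  have hinj {s t : ℕ} (ht : t ≤ n) : Set.InjOn (γ 0) (Ioo s t) :=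
    (h.injOn (by decide) 0).mono (by
      rw [coe_Ioo]
      exact Set.Ioo_subset_Ioo (Nat.zero_le s) ht)
  constructor
  · refine le_pairCount_of_injOn (s := 2 * N + 2) (t := n) (by omega) (hinj le_rfl)
      fun q hq hqn => ⟨h.between _ _ _ ?_ ?_ ?_, h.between _ _ _ ?_ ?_ ?_⟩ <;> omega
  · refine le_pairCount_of_injOn (s := N + 1) (t := 2 * N + 2) (by omega) (hinj (by omega))
      fun q hq hqn => ⟨h.between _ _ _ ?_ ?_ ?_, h.after _ _ _ ?_ ?_ ?_⟩ <;> omega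
  · refine le_pairCount_of_injOn (s := 0) (t := N + 1) (by omega) (hinj (by omega))
      fun q hq hqn => ⟨h.after _ _ _ ?_ ?_ ?_, h.after _ _ _ ?_ ?_ ?_⟩ <;> omega

lemma le_pairCount_of_zero_one (h : IsHomogeneous n x γ e₁ 0 1) (hn : 3 * N + 3 ≤ n) :
    N ≤ pairCount (x (N + 1)) (x (2 * N + 2)) 1 1 ∧
      N ≤ pairCount (x (N + 1)) (x (2 * N + 2)) 1 0 ∧
      N ≤ pairCount (x (N + 1)) (x (2 * N + 2)) 0 1 ∧
      N ≤ pairCount (x (N + 1)) (x (2 * N + 2)) 0 0 := by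
  have hinj {p s t : ℕ} (hp : p ≤ s) (ht : t ≤ n) : Set.InjOn (γ p) (Ioo s t) :=
    (h.injOn (by decide) p).mono (by
      rw [coe_Ioo]
      exact Set.Ioo_subset_Ioo hp ht)
  refine ⟨?_, ?_, ?_, ?_⟩
  · refine le_pairCount_of_injOn (f := γ 0) (s := 0) (t := N + 1) (by omega)
      (hinj le_rfl (by omega))
      fun q hq hqn => ⟨h.after _ _ _ ?_ ?_ ?_, h.after _ _ _ ?_ ?_ ?_⟩ <;> omega
  · refine le_pairCount_of_injOn (f := γ (N + 1)) (s := 2 * N + 2) (t := n) (by omega)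
      (hinj (by omega) le_rfl)
      fun q hq hqn => ⟨h.one _ _ ?_ ?_, h.between _ _ _ ?_ ?_ ?_⟩ <;> omega
  · refine le_pairCount_of_injOn (f := γ 0) (s := N + 1) (t := 2 * N + 2) (by omega)
      (hinj (by omega) (by omega))
      fun q hq hqn => ⟨h.between _ _ _ ?_ ?_ ?_, h.after _ _ _ ?_ ?_ ?_⟩ <;> omega
  · refine le_pairCount_of_injOn (f := γ 0) (s := 2 * N + 2) (t := n) (by omega)
      (hinj (by omega) le_rfl)
      fun q hq hqn => ⟨h.between _ _ _ ?_ ?_ ?_, h.between _ _ _ ?_ ?_ ?_⟩ <;> omega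

theorem isTower_of_admissible (h : IsHomogeneous n x γ e₁ e₂ e₃) (hC : Admissible ℓ a b C)
    (hx : ∀ i < n, x i ∈ C) (hn : 3 * (a + b) + 2 * ℓ + 4 ≤ n) :
    IsTower (a + b) (x (a + b + 1)) (x (2 * (a + b) + 2)) := by
  have hne := h.between_ne_after hC hx (by omega)
  obtain ⟨h₂, h₃⟩ := h.ne_two_of_ne hC hx (by omega) hne
  obtain ⟨rfl, rfl⟩ | ⟨rfl, rfl⟩ : e₂ = 1 ∧ e₃ = 0 ∨ e₂ = 0 ∧ e₃ = 1 := by omega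
  · exact h.isTower (by omega)
  · obtain ⟨h₁₁, h₁₀, h₀₁, h₀₀⟩ := h.le_pairCount_of_zero_one (N := a + b) (by omega)
    exact (hC.not_pairCount _ (hx (a + b + 1) (by omega)) _ (hx (2 * (a + b) + 2) (by omega))
      (by omega)).elim

end IsHomogeneous

lemma pair_sublist {α : Type*} (l : List α) (d : α) {p q : ℕ} (hpq : p < q) (hq : q < l.length) :
    [l.getD p d, l.getD q d] <+ l := by
  have hp := hpq.trans hq
  have := List.map_getElem_sublist (l := l) (is := [⟨p, hp⟩, ⟨q, hq⟩]) (by simpa using hpq)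
  simpa [List.getElem?_eq_getElem hp, List.getElem?_eq_getElem hq] using this

lemma triple_sublist {α : Type*} (l : List α) (d : α) {p q r : ℕ} (hpq : p < q) (hqr : q < r)
    (hr : r < l.length) : [l.getD p d, l.getD q d, l.getD r d] <+ l := by
  have hq := hqr.trans hr
  have hp := hpq.trans hq
  have := List.map_getElem_sublist (l := l) (is := [⟨p, hp⟩, ⟨q, hq⟩, ⟨r, hr⟩])
    (by simpa [hqr] using ⟨hpq, hpq.trans hqr⟩)
  simpa [List.getElem?_eq_getElem hp, List.getElem?_eq_getElem hq,
    List.getElem?_eq_getElem hr] using this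

lemma exists_isHomogeneous (n : ℕ) : ∃ n₀, ∀ {ι : Type u} (l : List (ι → Fin 3)), n₀ ≤ l.length →
    l.Pairwise (fun x y => ∃ r, x r = 1 ∧ y r = 2) →
    ∃ l', l' <+ l ∧ n ≤ l'.length ∧
      ∃ γ e₁ e₂ e₃, IsHomogeneous l'.length (l'.getD · 0) γ e₁ e₂ e₃ := by
  obtain ⟨n₀, hn₀⟩ := exists_isRamseyBound.{u} 3 fun _ : Fin 3 × Fin 3 × Fin 3 => n
  refine ⟨max n₀ 2, fun {ι} l hl hpair => ?_⟩
  rw [List.pairwise_iff_forall_sublist] at hpair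
  obtain ⟨hln₀, hl2⟩ := max_le_iff.1 hl
  have hι : Nonempty ι := ⟨(hpair (pair_sublist l 0 one_pos hl2)).choose⟩
  choose! g hg using fun x y : ι → Fin 3 => @hpair x y
  let f : List (ι → Fin 3) → Fin 3 × Fin 3 × Fin 3
    | [x, y, z] => (x (g y z), y (g x z), z (g x y))
    | _ => (0, 0, 0)
  obtain ⟨⟨e₁, e₂, e₃⟩, l', hl', hn, hf⟩ := hn₀ _ l f hln₀
  refine ⟨l', hl', hn, fun i j => g (l'.getD i 0) (l'.getD j 0), e₁, e₂, e₃, ?_⟩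
  have hpairs (i j) (hij : i < j) (hj : j < l'.length) :=
    hg _ _ ((pair_sublist l' 0 hij hj).trans hl')
  have htriples (p q r) (hpq : p < q) (hqr : q < r) (hr : r < l'.length) :=
    hf _ (triple_sublist l' 0 hpq hqr hr) rfl
  simp only [f, Prod.mk.injEq] at htriples
  exact ⟨fun i j hij hj => (hpairs i j hij hj).1, fun i j hij hj => (hpairs i j hij hj).2,
    fun p q r hpq hqr hr => (htriples p q r hpq hqr hr).1,
    fun p q r hpq hqr hr => (htriples p q r hpq hqr hr).2.1,
    fun p q r hpq hqr hr => (htriples p q r hpq hqr hr).2.2⟩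

lemma exists_pair_isTower (ℓ a b : ℕ) : ∃ n₀, ∀ {ι : Type u} [Fintype ι] {C : Set (ι → Fin 3)},
    Admissible ℓ a b C → ∀ l : List (ι → Fin 3), (∀ x ∈ l, x ∈ C) → n₀ ≤ l.length →
    l.Pairwise (fun x y => ∃ r, x r = 1 ∧ y r = 2) →
    ∃ x y, [x, y] <+ l ∧ IsTower (a + b) x y := by
  obtain ⟨n₀, hn₀⟩ := exists_isHomogeneous.{u} (3 * (a + b) + 2 * ℓ + 4)
  refine ⟨n₀, fun {ι _ C} hC l hlC hl hpair => ?_⟩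
  obtain ⟨l', hl', hn, γ, e₁, e₂, e₃, hhom⟩ := hn₀ l hl hpair
  refine ⟨_, _, (pair_sublist l' 0 (by omega) (by omega)).trans hl',
    hhom.isTower_of_admissible hC (fun i hi => ?_) hn⟩
  simp only [List.getD_eq_getElem _ _ hi]
  exact hlC _ (hl'.subset (List.getElem_mem hi))

lemma exists_sublist_pairwise_isTower (ℓ a b n : ℕ) :
    ∃ n₀, ∀ {ι : Type u} [Fintype ι] {C : Set (ι → Fin 3)}, Admissible ℓ a b C →
    ∀ l : List (ι → Fin 3), (∀ x ∈ l, x ∈ C) → n₀ ≤ l.length →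
    l.Pairwise (fun x y => ∃ r, x r = 1 ∧ y r = 2) →
    ∃ l', l' <+ l ∧ n ≤ l'.length ∧ l'.Pairwise (IsTower (a + b)) := by
  obtain ⟨n₁, hn₁⟩ := exists_pair_isTower.{u} ℓ a b
  obtain ⟨n₀, hn₀⟩ := exists_sublist_pairwise.{u} (κ := Prop) (max n n₁)
  refine ⟨n₀, fun {ι _ C} hC l hlC hl hpair => ?_⟩
  obtain ⟨p, l', hl', hn, hp⟩ := hn₀ (fun p x y => IsTower (a + b) x y ↔ p) l hl
    (List.pairwise_of_forall fun x y => ⟨_, Iff.rfl⟩)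
  refine ⟨l', hl', (le_max_left _ _).trans hn, hp.imp fun h => h.2 ?_⟩
  obtain ⟨x, y, hxy, hT⟩ := hn₁ hC l' (fun x hx => hlC x (hl'.subset hx))
    ((le_max_right _ _).trans hn) (hpair.sublist hl')
  exact (List.pairwise_iff_forall_sublist.1 hp hxy).1 hT

lemma exists_apply_eq_two_of_ne {ι : Type*} {x y : ι → Fin 3} (h : {r | x r = 2} ≠ {r | y r = 2}) :
    ∃ u : Fin 2, (∃ r, x r = u.castSucc ∧ y r = 2) ∨ ∃ r, y r = u.castSucc ∧ x r = 2 := by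
  obtain ⟨r, hr⟩ : ∃ r, ¬(x r = 2 ↔ y r = 2) := by
    by_contra! hxy
    exact h (Set.ext hxy)
  by_cases hx : x r = 2
  · have hy : y r ≠ Fin.last 2 := fun hy => hr (iff_of_true hx hy)
    exact ⟨(y r).castPred hy, .inr ⟨r, (Fin.castSucc_castPred _ hy).symm, hx⟩⟩
  · exact ⟨(x r).castPred hx, .inl ⟨r, (Fin.castSucc_castPred _ hx).symm, by tauto⟩⟩

lemma exists_pairwise_isTower_of_eq_castSucc (ℓ a b n : ℕ) :
    ∃ n₀, ∀ {ι : Type u} [Fintype ι] {C : Set (ι → Fin 3)}, Admissible ℓ a b C →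
    ∀ (l : List (ι → Fin 3)) (u : Fin 2), (∀ x ∈ l, x ∈ C) → n₀ ≤ l.length →
    l.Pairwise (fun x y => ∃ r, x r = u.castSucc ∧ y r = 2) →
    ∃ l', l' ⊆ l ∧ n ≤ l'.length ∧ l'.Pairwise (IsTower (a + b)) := by
  obtain ⟨n₀, hn₀⟩ := exists_sublist_pairwise_isTower.{u} ℓ a b n
  refine ⟨n₀, fun {ι _ C} hC l u hlC hl hpair => ?_⟩
  obtain rfl | rfl : u = 0 ∨ u = 1 := by omega
  · obtain ⟨l', hl', hn, hT⟩ := hn₀ hC.image_swap (l.map (Equiv.swap 0 1 ∘ ·))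
      (by simpa using fun x hx => ⟨x, hlC x hx, rfl⟩) (by simpa using hl)
      (List.pairwise_map.2 (hpair.imp fun ⟨r, hx, hy⟩ => ⟨r, by simp [hx], by simp [hy]; rfl⟩))
    obtain ⟨l'', hl'', rfl⟩ := List.sublist_map_iff.1 hl'
    refine ⟨l''.reverse, fun x hx => hl''.subset (List.mem_reverse.1 hx), by simpa using hn, ?_⟩
    rw [List.pairwise_reverse]
    exact (List.pairwise_map.1 hT).imp isTower_swap_comp.1
  · obtain ⟨l', hl', hT⟩ := hn₀ hC l hlC hl hpair
    exact ⟨l', hl'.subset, hT⟩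

lemma exists_pairwise_isTower_of_ne (ℓ a b n : ℕ) :
    ∃ n₀, ∀ {ι : Type u} [Fintype ι] {C : Set (ι → Fin 3)}, Admissible ℓ a b C →
    ∀ l : List (ι → Fin 3), (∀ x ∈ l, x ∈ C) → n₀ ≤ l.length →
    l.Pairwise (fun x y => {r | x r = 2} ≠ {r | y r = 2}) →
    ∃ l', l' ⊆ l ∧ n ≤ l'.length ∧ l'.Pairwise (IsTower (a + b)) := by
  obtain ⟨n₁, hn₁⟩ := exists_pairwise_isTower_of_eq_castSucc.{u} ℓ a b n
  obtain ⟨n₀, hn₀⟩ := exists_sublist_pairwise.{u} (κ := Fin 2 ⊕ Fin 2) n₁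
  refine ⟨n₀, fun {ι _ C} hC l hlC hl hne => ?_⟩
  obtain ⟨u | u, l', hl', hn, hpair⟩ := hn₀
    (Sum.elim (fun u x y => ∃ r, x r = u.castSucc ∧ y r = 2)
      fun u x y => ∃ r, y r = u.castSucc ∧ x r = 2) l hl
    (hne.imp fun h => (exists_apply_eq_two_of_ne h).elim fun u hu =>
      hu.elim (fun hu => ⟨.inl u, hu⟩) fun hu => ⟨.inr u, hu⟩)
  · obtain ⟨l'', hl'', hT⟩ := hn₁ hC l' u (fun x hx => hlC x (hl'.subset hx)) hn hpair
    exact ⟨l'', fun x hx => hl'.subset (hl'' hx), hT⟩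
  · obtain ⟨l'', hl'', hT⟩ := hn₁ hC l'.reverse u
      (fun x hx => hlC x (hl'.subset (List.mem_reverse.1 hx))) (by simpa using hn)
      (List.pairwise_reverse.2 hpair)
    exact ⟨l'', fun x hx => hl'.subset (List.mem_reverse.1 (hl'' hx)), hT⟩

lemma card_filter_eq_sum_pairCount (x y : ι → Fin 3) (u : Fin 3) :
    #{r | x r = u} = ∑ v, pairCount x y u v := by
  rw [card_eq_sum_card_fiberwise (f := y) (t := univ) (by simp)]
  simp only [filter_filter, pairCount]

lemma IsTower.exists_one_two (hT : IsTower (a + b) x y) (hC : Admissible ℓ a b C) (hx : x ∈ C)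
    (hy : y ∈ C) (hxy : #{r | x r = 1} = #{r | y r = 1}) : ∃ r, y r = 1 ∧ x r = 2 := by
  have h₀₁ := hT.pairCount_zero_one_lt hC hx hy
  have h₁₀ := hT.one_zero
  rw [card_filter_eq_sum_pairCount x y, card_filter_eq_sum_pairCount y x, Fin.sum_univ_three,
    Fin.sum_univ_three, pairCount_comm y x, pairCount_comm y x, pairCount_comm y x] at hxy
  obtain ⟨r, hr⟩ := card_pos.1 (show 0 < pairCount x y 2 1 by omega)
  exact ⟨r, (mem_filter.1 hr).2.symm⟩

/- In a long list of columns with the same number of ones the relation `IsTower` would hold for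
some pair in both orders. -/
theorem exists_card_le_of_injOn (ℓ a b : ℕ) :
    ∃ K, ∀ {ι : Type u} [Fintype ι] {C : Set (ι → Fin 3)}, Admissible ℓ a b C →
    ∀ (D : Finset (ι → Fin 3)) (k : ℕ), (D : Set (ι → Fin 3)) ⊆ C → (∀ x ∈ D, #{r | x r = 1} = k) →
    Set.InjOn (fun x => {r | x r = 2}) (D : Set (ι → Fin 3)) → #D ≤ K := by
  obtain ⟨n₁, hn₁⟩ := exists_pair_isTower.{u} ℓ a b
  obtain ⟨n₀, hn₀⟩ := exists_pairwise_isTower_of_ne.{u} ℓ a b n₁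
  refine ⟨n₀, fun {ι _ C} hC D k hDC hDk hinj => ?_⟩
  by_contra! hD
  obtain ⟨l, hlD, hn, hT⟩ := hn₀ hC D.toList (fun x hx => hDC (mem_toList.1 hx))
    (by simpa using hD.le)
    ((nodup_toList D).imp_of_mem fun hx hy => hinj.ne (mem_toList.1 hx) (mem_toList.1 hy))
  have hlD' (x) (hx : x ∈ l) : x ∈ D := mem_toList.1 (hlD hx)
  obtain ⟨y, x, hyx, hTyx⟩ := hn₁ hC l.reverse
    (fun x hx => hDC (hlD' x (List.mem_reverse.1 hx))) (by simpa using hn)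
    (List.pairwise_reverse.2 (hT.imp_of_mem fun hx hy hxy =>
      hxy.exists_one_two hC (hDC (hlD' _ hx)) (hDC (hlD' _ hy))
        ((hDk _ (hlD' _ hx)).trans (hDk _ (hlD' _ hy)).symm)))
  have hmem {z} (hz : z ∈ [y, x]) : z ∈ C := hDC (hlD' _ (List.mem_reverse.1 (hyx.subset hz)))
  have hTxy : IsTower (a + b) x y := (List.pairwise_reverse.2 hT).forall_sublist hyx
  have h₀₁ := hTxy.pairCount_zero_one_lt hC (hmem (by simp)) (hmem (by simp))
  have := hTyx.one_zero
  rw [pairCount_comm] at this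
  omega

end Column

section ColumnCount

universe u

variable {ι : Type u} [Fintype ι] {C : Set (ι → Fin 3)} {D : Finset (ι → Fin 3)} {x y : ι → Fin 3}
  {ℓ a b k s : ℕ} {u : Fin 3}

lemma pairCount_two_right (h : {r | x r = 2} = {r | y r = 2}) (hu : u ≠ 2) :
    pairCount x y u 2 = 0 := by
  simp only [pairCount, card_eq_zero, filter_eq_empty_iff]
  rintro r - ⟨hx, hy⟩
  exact hu (hx.symm.trans ((Set.ext_iff.1 h r).2 hy))

lemma pairCount_one_zero_lt (hC : Admissible ℓ a b C) (hx : x ∈ C) (hy : y ∈ C)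
    (h2 : {r | x r = 2} = {r | y r = 2}) (h1 : #{r | x r = 1} = #{r | y r = 1})
    (hlow : #{r | y r = 1} ≤ #{r | y r = 0}) (ha : a ≤ pairCount x y 1 1) :
    pairCount x y 1 0 < b := by
  rw [card_filter_eq_sum_pairCount y x, card_filter_eq_sum_pairCount y x, Fin.sum_univ_three,
    Fin.sum_univ_three, pairCount_two_right h2.symm (by decide),
    pairCount_two_right h2.symm (by decide)] at hlow
  rw [card_filter_eq_sum_pairCount x y, card_filter_eq_sum_pairCount y x, Fin.sum_univ_three,
    Fin.sum_univ_three, pairCount_two_right h2 (by decide),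
    pairCount_two_right h2.symm (by decide)] at h1
  simp only [pairCount_comm y x] at h1 hlow
  by_contra! h₁₀
  exact hC.not_pairCount x hx y hy (by omega)

lemma card_fiber_mul_min_le (hC : Admissible ℓ a (s + 1) C) (ha : 1 ≤ a) (hs : s ≠ 0)
    (hDC : ↑D ⊆ C) (hk : ∀ x ∈ D, #{r | x r = 1} = k)
    (hlow : ∀ x ∈ D, #{r | x r = 1} ≤ #{r | x r = 0})
    (h2 : ∀ x ∈ D, ∀ y ∈ D, {r | x r = 2} = {r | y r = 2}) :
    #D * min (Fintype.card ι + 1) ((k + 1) ^ 2) ≤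
      levelConst a s * (Fintype.card ι + 1) ^ (a + s) := by
  classical
  let ones (x : ι → Fin 3) : Finset ι := {r | x r = 1}
  have hinj : Set.InjOn ones D := by
    intro x hx y hy hxy
    funext r
    have h₁ : x r = 1 ↔ y r = 1 := by simpa [ones] using Finset.ext_iff.1 hxy r
    have h₂ : x r = 2 ↔ y r = 2 := Set.ext_iff.1 (h2 x hx y hy) r
    omega
  have hdiff (x) (hx : x ∈ D) (y) (hy : y ∈ D) (hxy : a ≤ #(ones x ∩ ones y)) :
      #(ones x \ ones y) ≤ s := by
    have h := pairCount_one_zero_lt hC (hDC hx) (hDC hy) (h2 x hx y hy)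
      ((hk x hx).trans (hk y hy).symm) (hlow y hy) (by rwa [pairCount, filter_and])
    refine Nat.le_of_lt_succ (lt_of_le_of_lt (card_le_card fun r hr => ?_) h)
    have h₂ : x r = 2 ↔ y r = 2 := Set.ext_iff.1 (h2 x hx y hy) r
    simp only [ones, mem_sdiff, mem_filter, mem_univ, true_and] at hr ⊢
    omega
  rw [← card_image_of_injOn hinj, ← card_univ]
  refine card_mul_min_le ha hs (fun A _ => subset_univ A) (forall_mem_image.2 hk) ?_
  simpa only [forall_mem_image] using hdiff

lemma card_mul_le_card_image_mul {α β : Type*} [DecidableEq β] {D : Finset α} {f : α → β} {n P : ℕ}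
    (h : ∀ z ∈ D.image f, #{x ∈ D | f x = z} * n ≤ P) : #D * n ≤ #(D.image f) * P := by
  rw [card_eq_sum_card_image f, sum_mul, ← smul_eq_mul]
  exact sum_le_card_nsmul _ _ _ h

lemma exists_card_level_mul_min_le (ℓ a s : ℕ) (ha : 1 ≤ a) (hs : s ≠ 0) :
    ∃ P, ∀ {ι : Type u} [Fintype ι] {C : Set (ι → Fin 3)}, Admissible ℓ a (s + 1) C →
    ∀ (D : Finset (ι → Fin 3)) (k : ℕ), ↑D ⊆ C → (∀ x ∈ D, #{r | x r = 1} = k) →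
    (∀ x ∈ D, #{r | x r = 1} ≤ #{r | x r = 0}) →
    #D * min (Fintype.card ι + 1) ((k + 1) ^ 2) ≤ P * (Fintype.card ι + 1) ^ (a + s) := by
  classical
  obtain ⟨K, hK⟩ := exists_card_le_of_injOn.{u} ℓ a (s + 1)
  refine ⟨K * levelConst a s, fun {ι _ C} hC D k hDC hk hlow => ?_⟩
  let twos (x : ι → Fin 3) : Set ι := {r | x r = 2}
  obtain ⟨D', hD', hinj, himage⟩ :=
    exists_subset_injOn_image_eq_of_surjOn (f := twos) D (D.image twos) (by simp [Set.surjOn_image])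
  have hcard : #(D.image twos) ≤ K := by
    rw [← himage, card_image_of_injOn hinj]
    exact hK hC D' k ((coe_subset.2 hD').trans hDC) (fun x hx => hk x (hD' hx)) hinj
  calc #D * min (Fintype.card ι + 1) ((k + 1) ^ 2)
      ≤ #(D.image twos) * (levelConst a s * (Fintype.card ι + 1) ^ (a + s)) := by
        refine card_mul_le_card_image_mul fun S _ => ?_
        have hfiber (x) (hx : x ∈ ({x ∈ D | twos x = S} : Finset _)) := mem_filter.1 hx
        exact card_fiber_mul_min_le hC ha hs (fun x hx => hDC (hfiber x hx).1)
          (fun x hx => hk x (hfiber x hx).1) (fun x hx => hlow x (hfiber x hx).1)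
          fun x hx y hy => (hfiber x hx).2.trans (hfiber y hy).2.symm
    _ ≤ K * levelConst a s * (Fintype.card ι + 1) ^ (a + s) := by
        rw [← mul_assoc]
        gcongr

lemma exists_card_le_of_card_one_le_card_zero (ℓ a s : ℕ) (ha : 1 ≤ a) (hs : s ≠ 0) :
    ∃ P, ∀ {ι : Type u} [Fintype ι] {C : Set (ι → Fin 3)}, Admissible ℓ a (s + 1) C →
    ∀ D : Finset (ι → Fin 3), ↑D ⊆ C → (∀ x ∈ D, #{r | x r = 1} ≤ #{r | x r = 0}) →
    #D ≤ P * (Fintype.card ι + 1) ^ (a + s) := by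
  obtain ⟨P, hP⟩ := exists_card_level_mul_min_le.{u} ℓ a s ha hs
  refine ⟨3 * P, fun {ι _ C} hC D hDC hlow => ?_⟩
  rw [card_eq_sum_card_fiberwise (f := fun x => #{r | x r = 1}) (t := range (Fintype.card ι + 1))
    fun x _ => mem_range_succ_iff.2 (card_le_univ _), mul_assoc]
  refine sum_range_le_of_mul_min_le fun k _ => hP hC _ k ?_ ?_ ?_
  · exact (coe_subset.2 (filter_subset _ _)).trans hDC
  · exact fun x hx => (mem_filter.1 hx).2
  · exact fun x hx => hlow x (mem_filter.1 hx).1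

theorem exists_card_le_of_admissible (ℓ a s : ℕ) (ha : 1 ≤ a) (hs : s ≠ 0) :
    ∃ P, ∀ {ι : Type u} [Fintype ι] (D : Finset (ι → Fin 3)),
    Admissible ℓ a (s + 1) (D : Set (ι → Fin 3)) → #D ≤ P * (Fintype.card ι + 1) ^ (a + s) := by
  classical
  obtain ⟨P, hP⟩ := exists_card_le_of_card_one_le_card_zero.{u} ℓ a s ha hs
  refine ⟨P + P, fun {ι _} D hD => ?_⟩
  let low (x : ι → Fin 3) : Prop := #{r | x r = 1} ≤ #{r | x r = 0}
  have hlow : #{x ∈ D | low x} ≤ P * (Fintype.card ι + 1) ^ (a + s) :=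
    hP hD _ (coe_subset.2 (filter_subset _ _)) fun x hx => (mem_filter.1 hx).2
  have hinj : Function.Injective fun x : ι → Fin 3 => Equiv.swap 0 1 ∘ x :=
    (Equiv.swap 0 1).injective.comp_left
  have hhigh : #{x ∈ D | ¬low x} ≤ P * (Fintype.card ι + 1) ^ (a + s) := by
    rw [← card_image_of_injective _ hinj]
    refine hP hD.image_swap _ ?_ (forall_mem_image.2 fun x hx => ?_)
    · rw [coe_image]
      exact Set.image_mono (coe_subset.2 (filter_subset _ _))
    · have hx' := (not_le.1 (mem_filter.1 hx).2).le
      simpa [Equiv.swap_apply_eq_iff] using hx'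
  rw [← card_filter_add_card_filter_not (s := D) low, add_mul]
  exact add_le_add hlow hhigh

end ColumnCount

section Forb

variable {m n r a b c d : ℕ} {𝓕 : Set CMat}

lemma card_columns_le {A : MatN m n} (hA : RMat r A) (hs : SimpleM A) : n ≤ r ^ m := by
  have hinj : Function.Injective fun (j : Fin n) (i : Fin m) => (⟨A i j, hA i j⟩ : Fin r) :=
    fun j j' h => hs j j' fun i => Fin.val_eq_of_eq (congrFun h i)
  simpa using Fintype.card_le_of_injective _ hinj

lemma le_forb {A : MatN m n} (hA : RMat r A) (hs : SimpleM A) (h : AvoidsFam A 𝓕) :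
    n ≤ forb m r 𝓕 :=
  le_csSup ⟨r ^ m, fun _ ⟨_, hA, hs, _⟩ => card_columns_le hA hs⟩ ⟨A, hA, hs, h⟩

lemma forb_le {N : ℕ} (h : ∀ n (A : MatN m n), RMat r A → SimpleM A → AvoidsFam A 𝓕 → n ≤ N) :
    forb m r 𝓕 ≤ N :=
  csSup_le' fun n ⟨A, hA, hs, hF⟩ => h n A hA hs hF

lemma forb_le_forbmax : forb m r 𝓕 ≤ forbmax m r 𝓕 := by
  refine le_csSup (((Set.finite_Iic m).image (forb · r 𝓕)).subset ?_).bddAbove ⟨m, le_rfl, rfl⟩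
  rintro _ ⟨m', hm', rfl⟩
  exact ⟨m', hm', rfl⟩

lemma forbmax_le {N : ℕ} (h : ∀ m' ≤ m, forb m' r 𝓕 ≤ N) : forbmax m r 𝓕 ≤ N :=
  csSup_le' fun _ ⟨m', hm', hx⟩ => hx.trans_le (h m' hm')

lemma card_le_forb_Fabcd {𝓢 : Finset (Finset (Fin m))}
    (h : ∀ X ∈ 𝓢, ∀ Y ∈ 𝓢, ¬(a ≤ #(X ∩ Y) ∧ b ≤ #(X \ Y) ∧ c ≤ #(Y \ X))) :
    #𝓢 ≤ forb m 2 {⟨a + b + c + d, 2, Fabcd a b c d⟩} := by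
  let e := 𝓢.equivFin.symm
  let A : MatN m #𝓢 := fun i j => if i ∈ (e j).1 then 1 else 0
  have hone (i j) : A i j = 1 ↔ i ∈ (e j).1 := by simp [A]
  have hzero (i j) : A i j = 0 ↔ i ∉ (e j).1 := by simp [A]
  refine le_forb (A := A) (fun i j => ?_) (fun j j' hj => e.injective (Subtype.ext ?_)) ?_
  · dsimp only [A]
    split_ifs <;> decide
  · ext i
    rw [← hone, ← hone, hj]
  · rintro _ rfl hA
    obtain ⟨j, j', -, h₁₁, h₁₀, h₀₁, -⟩ := isConfig_Fabcd_iff.1 hA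
    refine h _ (e j).2 _ (e j').2 ⟨h₁₁.trans_eq ?_, h₁₀.trans_eq ?_, h₀₁.trans_eq ?_⟩ <;>
      refine congrArg card (Finset.ext fun i => ?_)
    · simp [hone]
    · simp [hone, hzero]
    · simp [hone, hzero, and_comm]

lemma one_le_forb_Fabcd (hb : b ≠ 0) : 1 ≤ forb m 2 {⟨a + b + c + d, 2, Fabcd a b c d⟩} :=
  card_le_forb_Fabcd (𝓢 := {∅}) (by simp [hb])

lemma choose_le_forb_Fabcd_succ : m.choose (a + b) ≤
    forb m 2 {⟨a + 1 + b + c + d, 2, Fabcd (a + 1) b c d⟩} := by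
  have hcard : #(powersetCard (a + b) (univ : Finset (Fin m))) = m.choose (a + b) := by simp
  rw [← hcard]
  refine card_le_forb_Fabcd fun X hX Y _ h => ?_
  have := card_inter_add_card_sdiff X Y
  rw [(mem_powersetCard.1 hX).2] at this
  omega

section FillBelow

variable {α : Type*} [Fintype α] [LinearOrder α] {S T : Finset α}

/-- The elements strictly below all members of `S`. Joining them to `S` makes the families in the
lower bound for `a = 0`. -/
def strictLowerBounds (S : Finset α) : Finset α := {r | ∀ t ∈ S, r < t}

lemma strictLowerBounds_total (S T : Finset α) :
    strictLowerBounds S ⊆ strictLowerBounds T ∨ strictLowerBounds T ⊆ strictLowerBounds S := by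
  have hlower (S : Finset α) : IsLowerSet (strictLowerBounds S : Set α) := fun r r' hr h => by
    simp only [strictLowerBounds, coe_filter, mem_univ, true_and, Set.mem_ofPred_eq] at h ⊢
    exact fun t ht => hr.trans_lt (h t ht)
  exact_mod_cast (hlower S).total (hlower T)

lemma disjoint_strictLowerBounds (S : Finset α) : Disjoint S (strictLowerBounds S) := by
  rw [disjoint_left]
  intro r hr hrS
  exact lt_irrefl r ((mem_filter.1 hrS).2 r hr)

lemma card_union_strictLowerBounds_sdiff_lt (hS : S.Nonempty)
    (hST : strictLowerBounds S ⊆ strictLowerBounds T) :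
    #((S ∪ strictLowerBounds S) \ (T ∪ strictLowerBounds T)) < #S := by
  have hmin : S.min' hS ∈ T ∪ strictLowerBounds T := by
    by_contra hmin
    simp only [strictLowerBounds, mem_union, mem_filter, mem_univ, true_and, not_or, not_forall,
      not_lt] at hmin
    obtain ⟨hT, t, ht, hle⟩ := hmin
    have htS : t ∈ strictLowerBounds S := mem_filter.2 ⟨mem_univ t, fun t' ht' =>
      (hle.lt_of_ne fun h => hT (h ▸ ht)).trans_le (S.min'_le t' ht')⟩
    exact disjoint_left.1 (disjoint_strictLowerBounds T) ht (hST htS)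
  refine card_lt_card ((ssubset_iff_of_subset fun r hr => ?_).2
    ⟨_, S.min'_mem hS, fun h => (mem_sdiff.1 h).2 hmin⟩)
  simp only [mem_sdiff, mem_union, not_or] at hr
  exact hr.1.resolve_right fun h => hr.2.2 (hST h)

lemma injOn_union_strictLowerBounds (k : ℕ) :
    Set.InjOn (fun S : Finset α => S ∪ strictLowerBounds S) {S | #S = k} := by
  intro S hS T hT (h : S ∪ strictLowerBounds S = T ∪ strictLowerBounds T)
  have hcard := congrArg card h
  simp only [card_union_of_disjoint (disjoint_strictLowerBounds _)] at hcard
  have hlb : strictLowerBounds S = strictLowerBounds T := by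
    simp only [Set.mem_ofPred_eq] at hS hT
    rcases strictLowerBounds_total S T with hST | hTS
    · exact eq_of_subset_of_card_le hST (by omega)
    · exact (eq_of_subset_of_card_le hTS (by omega)).symm
  rw [← union_sdiff_cancel_right (disjoint_strictLowerBounds S),
    ← union_sdiff_cancel_right (disjoint_strictLowerBounds T), h, hlb]

end FillBelow

lemma choose_le_forb_Fabcd_zero (hb : b ≠ 0) :
    m.choose b ≤ forb m 2 {⟨0 + b + b + d, 2, Fabcd 0 b b d⟩} := by
  have hcard : #((powersetCard b (univ : Finset (Fin m))).image fun S => S ∪ strictLowerBounds S) =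
      m.choose b := by
    rw [card_image_of_injOn ((injOn_union_strictLowerBounds b).mono fun S hS =>
      (mem_powersetCard.1 hS).2), card_powersetCard, card_univ, Fintype.card_fin]
  rw [← hcard]
  refine card_le_forb_Fabcd ?_
  simp only [forall_mem_image, mem_powersetCard, subset_univ, true_and, zero_le]
  rintro S hS T hT ⟨hST, hTS⟩
  rcases strictLowerBounds_total S T with h | h
  · exact (card_union_strictLowerBounds_sdiff_lt (card_ne_zero.1 (hS ▸ hb)) h).not_ge (hS ▸ hST)
  · exact (card_union_strictLowerBounds_sdiff_lt (card_ne_zero.1 (hT ▸ hb)) h).not_ge (hT ▸ hTS)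

lemma exists_succ_pow_le_mul_max_choose (d : ℕ) :
    ∃ Q, ∀ m : ℕ, (m + 1) ^ d ≤ Q * max 1 (m.choose d) := by
  refine ⟨(2 * d) ^ d + 2 ^ d * d.factorial, fun m => ?_⟩
  rw [add_mul]
  obtain hm | hm := le_total (m + 1) (2 * d)
  · exact ((Nat.pow_le_pow_left hm d).trans (Nat.le_mul_of_pos_right _ (by simp))).trans
      (Nat.le_add_right _ _)
  · calc (m + 1) ^ d ≤ (2 * (m + 1 - d)) ^ d := Nat.pow_le_pow_left (by omega) d
      _ = 2 ^ d * (m + 1 - d) ^ d := mul_pow _ _ _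
      _ ≤ 2 ^ d * m.descFactorial d := by
          gcongr
          exact Nat.pow_sub_le_descFactorial m d
      _ = 2 ^ d * d.factorial * m.choose d := by
          rw [Nat.descFactorial_eq_factorial_mul_choose, mul_assoc]
      _ ≤ 2 ^ d * d.factorial * max 1 (m.choose d) := by
          gcongr
          exact le_max_right _ _
      _ ≤ _ := Nat.le_add_left _ _

lemma exists_succ_pow_le_mul_forb_Fabcd (a s : ℕ) : ∃ Q, ∀ m : ℕ, (m + 1) ^ (max a 1 + s) ≤
    Q * forb m 2 {⟨a + (s + 1) + (s + 1) + a, 2, Fabcd a (s + 1) (s + 1) a⟩} := by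
  obtain ⟨Q, hQ⟩ := exists_succ_pow_le_mul_max_choose (max a 1 + s)
  refine ⟨Q, fun m => (hQ m).trans
    (Nat.mul_le_mul_left Q (max_le (one_le_forb_Fabcd s.succ_ne_zero) ?_))⟩
  rcases a with - | a
  · rw [Nat.zero_max, add_comm]
    exact choose_le_forb_Fabcd_zero s.succ_ne_zero
  · rw [max_eq_left (by omega), add_right_comm a 1 s, add_assoc]
    exact choose_le_forb_Fabcd_succ

end Forb

section ForbiddenFamily

variable {ℓ r r' m n a b : ℕ}

lemma isConfig_of_apply_eq {k p : ℕ} {F : MatN k p} {A : MatN m n} {f : Fin k → Fin m}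
    {g : Fin p → Fin n} (hrow : Function.Injective F) (hcol : SimpleM F)
    (h : ∀ i j, A (f i) (g j) = F i j) : IsConfig F A := by
  refine ⟨f, g, fun i i' hi => hrow (funext fun j => ?_), fun j j' hj => hcol j j' fun i => ?_, h⟩
  · rw [← h, ← h, hi]
  · rw [← h, ← h, hj]

lemma Imat_injective (hab : a ≠ b) : Function.Injective (Imat ℓ a b) := fun i i' h => by
  by_contra hne
  have := congrFun h i'
  simp only [Imat, if_neg hne, if_true] at this
  exact hab this.symm

lemma simpleM_Imat (hab : a ≠ b) : SimpleM (Imat ℓ a b) := fun j j' h => by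
  by_contra hne
  have := h j
  simp only [Imat, if_neg hne, if_true] at this
  exact hab this

lemma Tmat_injective (hab : a ≠ b) : Function.Injective (Tmat ℓ a b) := fun i i' h => by
  by_contra hne
  wlog hlt : i < i' generalizing i i'
  · exact this i' i h.symm (Ne.symm hne) (by omega)
  have := congrFun h i
  simp only [Tmat, lt_irrefl, if_false, if_pos (Fin.lt_def.1 hlt)] at this
  exact hab this.symm

lemma simpleM_Tmat (hab : a ≠ b) : SimpleM (Tmat ℓ a b) := fun j j' h => by
  by_contra hne
  wlog hlt : j < j' generalizing j j'
  · exact this j' j (fun i => (h i).symm) (Ne.symm hne) (by omega)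
  have := h j'
  simp only [Tmat, lt_irrefl, if_false, if_pos (Fin.lt_def.1 hlt)] at this
  exact hab this

lemma rMat_of_mem_TFam {M : CMat} (hM : M ∈ TFam ℓ r) : RMat r M.mat := by
  obtain ⟨a, b, ha, hb, -, rfl | rfl⟩ := hM <;> intro i j <;> dsimp only [Imat, Tmat] <;>
    split_ifs <;> assumption

lemma lt_of_rMat_Imat (hℓ : 2 ≤ ℓ) (h : RMat r (Imat ℓ a b)) : a < r ∧ b < r := by
  obtain ⟨ℓ, rfl⟩ := Nat.exists_eq_add_of_le' hℓ
  exact ⟨by simpa [Imat] using h 0 0, by simpa [Imat] using h 0 1⟩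

lemma lt_of_rMat_Tmat (hℓ : 2 ≤ ℓ) (h : RMat r (Tmat ℓ a b)) : a < r ∧ b < r := by
  obtain ⟨ℓ, rfl⟩ := Nat.exists_eq_add_of_le' hℓ
  exact ⟨by simpa [Tmat] using h 1 0, by simpa [Tmat] using h 0 0⟩

lemma mem_TFam_of_rMat (hℓ : 2 ≤ ℓ) {M : CMat} (hM : M ∈ TFam ℓ r) (h : RMat r' M.mat) :
    M ∈ TFam ℓ r' := by
  obtain ⟨a, b, -, -, hab, rfl | rfl⟩ := hM
  · exact ⟨a, b, (lt_of_rMat_Imat hℓ h).1, (lt_of_rMat_Imat hℓ h).2, hab, .inl rfl⟩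
  · exact ⟨a, b, (lt_of_rMat_Tmat hℓ h).1, (lt_of_rMat_Tmat hℓ h).2, hab, .inr rfl⟩

lemma rMat_of_isConfig {k p : ℕ} {F : MatN k p} {A : MatN m n} (h : IsConfig F A) (hA : RMat r A) :
    RMat r F := by
  obtain ⟨f, g, -, -, hF⟩ := h
  exact fun i j => hF i j ▸ hA _ _

lemma forb_le_forb_TFam_sdiff_union (hℓ : 2 ≤ ℓ) (hr : r ≤ r') (𝓕 : Set CMat) :
    forb m r 𝓕 ≤ forb m r' ((TFam ℓ r' \ TFam ℓ r) ∪ 𝓕) := by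
  refine forb_le fun n A hA hs hF => le_forb (fun i j => (hA i j).trans_le hr) hs ?_
  rintro M (⟨hM, hM'⟩ | hM) hMA
  · exact hM' (mem_TFam_of_rMat hℓ hM (rMat_of_isConfig hMA hA))
  · exact hF M hM hMA

section Avoiding

variable {A : MatN m n} {𝓕 : Set CMat} {u v : ℕ}

lemma not_isConfig_Imat (hℓ : 2 ≤ ℓ) (hF : AvoidsFam A ((TFam ℓ r' \ TFam ℓ r) ∪ 𝓕)) (hu : u < r')
    (hv : v < r') (huv : u ≠ v) (hr : r ≤ u ∨ r ≤ v) : ¬IsConfig (Imat ℓ u v) A := by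
  refine hF ⟨ℓ, ℓ, Imat ℓ u v⟩ (.inl ⟨⟨u, v, hu, hv, huv, .inl rfl⟩, fun hM => ?_⟩)
  have := lt_of_rMat_Imat hℓ (rMat_of_mem_TFam hM)
  omega

lemma not_isConfig_Tmat (hℓ : 2 ≤ ℓ) (hF : AvoidsFam A ((TFam ℓ r' \ TFam ℓ r) ∪ 𝓕)) (hu : u < r')
    (hv : v < r') (huv : u ≠ v) (hr : r ≤ u ∨ r ≤ v) : ¬IsConfig (Tmat ℓ u v) A := by
  refine hF ⟨ℓ, ℓ, Tmat ℓ u v⟩ (.inl ⟨⟨u, v, hu, hv, huv, .inr rfl⟩, fun hM => ?_⟩)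
  have := lt_of_rMat_Tmat hℓ (rMat_of_mem_TFam hM)
  omega

lemma admissible_range_column (hℓ : 2 ≤ ℓ) (hb : b ≠ 0) {col : Fin n → Fin m → Fin 3}
    (hcol : ∀ i j, A i j = col j i)
    (hF : AvoidsFam A ((TFam ℓ 3 \ TFam ℓ 2) ∪ {⟨a + b + b + a, 2, Fabcd a b b a⟩})) :
    Admissible ℓ a b (Set.range col) where
  not_pairCount := by
    rintro _ ⟨j, rfl⟩ _ ⟨j', rfl⟩ h
    have hcount (u v : Fin 3) :
        pairCount (A · j) (A · j') u v = pairCount (col j) (col j') u v := by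
      simp only [pairCount, hcol, Fin.val_inj]
    refine hF _ (.inr rfl) (isConfig_Fabcd_iff.2 ⟨j, j', ?_, ?_⟩)
    · rintro rfl
      have h₁₀ : pairCount (col j) (col j) 1 0 = 0 := by
        simp only [pairCount, card_eq_zero, filter_eq_empty_iff]
        rintro i - ⟨h₁, h₀⟩
        exact absurd (h₁.symm.trans h₀) (by decide)
      omega
    · exact ⟨h.1.trans_eq (hcount 1 1).symm, h.2.1.trans_eq (hcount 1 0).symm,
        h.2.2.1.trans_eq (hcount 0 1).symm, h.2.2.2.trans_eq (hcount 0 0).symm⟩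
  not_diagonal u v huv h2 ρ c hc h := by
    choose g hg using hc
    have huv' : (u : ℕ) ≠ v := Fin.val_ne_of_ne huv
    refine not_isConfig_Imat hℓ hF u.2 v.2 huv' (by omega) (isConfig_of_apply_eq (f := ρ) (g := g)
      (Imat_injective huv') (simpleM_Imat huv') fun i j => ?_)
    rw [hcol, hg, h]
    exact apply_ite _ _ _ _
  not_triangular u v huv h2 ρ c hc h := by
    choose g hg using hc
    have huv' : (u : ℕ) ≠ v := Fin.val_ne_of_ne huv
    refine not_isConfig_Tmat hℓ hF u.2 v.2 huv' (by omega) (isConfig_of_apply_eq (f := ρ) (g := g)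
      (Tmat_injective huv') (simpleM_Tmat huv') fun i j => ?_)
    rw [hcol, hg, h]
    exact apply_ite _ _ _ _

end Avoiding

lemma exists_forb_TFam_sdiff_union_le (ℓ a s : ℕ) (hℓ : 2 ≤ ℓ) (hs : s ≠ 0) :
    ∃ P, ∀ m, forb m 3 ((TFam ℓ 3 \ TFam ℓ 2) ∪
      {⟨a + (s + 1) + (s + 1) + a, 2, Fabcd a (s + 1) (s + 1) a⟩}) ≤
        P * (m + 1) ^ (max a 1 + s) := by
  obtain ⟨P, hP⟩ := exists_card_le_of_admissible.{0} ℓ (max a 1) s (le_max_right a 1) hs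
  refine ⟨P, fun m => forb_le fun n A hA hsimple hF => ?_⟩
  let col (j : Fin n) (i : Fin m) : Fin 3 := ⟨A i j, hA i j⟩
  have hinj : Function.Injective col := fun j j' h =>
    hsimple j j' fun i => Fin.val_eq_of_eq (congrFun h i)
  have hC : Admissible ℓ (max a 1) (s + 1) (univ.image col : Set (Fin m → Fin 3)) := by
    rw [coe_image, coe_univ, Set.image_univ]
    exact (admissible_range_column hℓ s.succ_ne_zero (fun _ _ => rfl) hF).mono_left
      (le_max_left a 1)
  simpa [card_image_of_injective _ hinj] using hP _ hC

theorem exists_forb_le_mul_forb (ℓ a b : ℕ) (hℓ : 2 ≤ ℓ) (hb : 2 ≤ b) :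
    ∃ c, ∀ m, ∀ m' ≤ m,
      forb m' 3 ((TFam ℓ 3 \ TFam ℓ 2) ∪ {⟨a + b + b + a, 2, Fabcd a b b a⟩}) ≤
        c * forb m 2 {⟨a + b + b + a, 2, Fabcd a b b a⟩} := by
  obtain ⟨s, rfl⟩ := Nat.exists_eq_add_of_le' (one_le_two.trans hb)
  obtain ⟨P, hP⟩ := exists_forb_TFam_sdiff_union_le ℓ a s hℓ (by omega)
  obtain ⟨Q, hQ⟩ := exists_succ_pow_le_mul_forb_Fabcd a s
  refine ⟨P * Q, fun m m' hm => (hP m').trans ?_⟩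
  rw [mul_assoc]
  refine Nat.mul_le_mul_left P (le_trans ?_ (hQ m))
  gcongr

end ForbiddenFamily

end ForbTheta

/-- For `ℓ ≥ 2`, `a ≥ 0`, `b ≥ 2`,
`forb(m, 3, (𝒯_ℓ(3) \ 𝒯_ℓ(2)) ∪ {F_{a,b,b,a}})` is `Θ(forbmax(m, F_{a,b,b,a}))`. -/
theorem stmt5 (ℓ a b : ℕ) (hℓ : 2 ≤ ℓ) (hb : 2 ≤ b) :
    ∃ c₁ c₂ : ℝ, 0 < c₁ ∧ 0 < c₂ ∧ ∀ m : ℕ, 1 ≤ m →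
      c₁ * (forbmax m 2 {⟨a + b + b + a, 2, Fabcd a b b a⟩} : ℝ) ≤
        (forb m 3 ((TFam ℓ 3 \ TFam ℓ 2) ∪ {⟨a + b + b + a, 2, Fabcd a b b a⟩}) : ℝ) ∧
      (forb m 3 ((TFam ℓ 3 \ TFam ℓ 2) ∪ {⟨a + b + b + a, 2, Fabcd a b b a⟩}) : ℝ) ≤
        c₂ * (forbmax m 2 {⟨a + b + b + a, 2, Fabcd a b b a⟩} : ℝ) := by
  obtain ⟨c, hc⟩ := ForbTheta.exists_forb_le_mul_forb ℓ a b hℓ hb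
  let F : Set CMat := {⟨a + b + b + a, 2, Fabcd a b b a⟩}
  let G : Set CMat := (TFam ℓ 3 \ TFam ℓ 2) ∪ F
  have hFG (m : ℕ) : forb m 2 F ≤ forb m 3 G :=
    ForbTheta.forb_le_forb_TFam_sdiff_union hℓ (by norm_num) F
  refine ⟨((c : ℝ) + 1)⁻¹, c + 1, by positivity, by positivity, fun m _ => ⟨?_, ?_⟩⟩
  · rw [inv_mul_le_iff₀ (by positivity)]
    have hlower : forbmax m 2 F ≤ (c + 1) * forb m 3 G := ForbTheta.forbmax_le fun m' hm' =>
      calc forb m' 2 F ≤ forb m' 3 G := hFG m'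
        _ ≤ c * forb m 2 F := hc m m' hm'
        _ ≤ (c + 1) * forb m 3 G := Nat.mul_le_mul c.le_succ (hFG m)
    exact_mod_cast hlower
  · have hupper : forb m 3 G ≤ (c + 1) * forbmax m 2 F :=
      (hc m m le_rfl).trans (Nat.mul_le_mul c.le_succ ForbTheta.forb_le_forbmax)
    exact_mod_cast hupper
end

section
/- Let ℓ ≥ 2 and let H be the 2×3 (0,1)-matrix with rows [0 1 0] and [0 0 1]. Then forb(m, 3, (𝒯_ℓ(3) \ 𝒯_ℓ(2)) ∪ {H}) is Θ(m): there exist constants c₁, c₂ > 0 such that for all m ≥ 1, c₁ · m ≤ forb(m, 3, (𝒯_ℓ(3) \ 𝒯_ℓ(2)) ∪ {H}) ≤ c₂ · m. -/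
/-
Call a symbol special if it is at least `2`. Avoiding `𝒯_ℓ(r) \ 𝒯_ℓ(2)` means avoiding every
`I_ℓ(a,b)` and `T_ℓ(a,b)` with a special symbol. Take rows `pᵢ` and columns `cᵢ` such that, for
`i < j`, the entries `(pᵢ, cᵢ)` and `(pᵢ, cⱼ)` differ and are not both ordinary. By Ramsey's theorem
a long such sequence has a subsequence with constant entries `x` above, `y` on and `z` below the
diagonal; the avoided matrices force `{x, z} = {0, 1}`, and so `y` is special.

In particular there is no long ladder, such a sequence in which moreover the entries `(pᵢ, cⱼ)`,
`i < j`, are special and depend on `i` only. Bound the number of columns of `S` by induction on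
the length of its longest ladder. Classify a column by the first row in which it has a special
entry and `S` is not constant. Prescribing that special entry shortens the ladders, so each class
obeys the linear bound for its number of mixed rows, those that contain both `0` and `1`. The
Ramsey argument shows that all but boundedly many indices of nonempty classes are mixed rows of
`S`; together with the avoidance of `H` it shows that a row is mixed in boundedly many classes
only. In the columns that belong to no class every row is constant or a `(0,1)`-row, and there the
avoidance of `H` shows that only single mixed rows can be shattered, so Pajor's inequality gives a
linear bound.
-/

section Ramsey

open Finset

/-- An upper bound for the Ramsey number of pairs for `k` colours and homogeneous sets of size `n`.
Starting the iteration at `1` makes the underlying set nonempty, which also covers `k * n = 0`. -/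
def ramseyBound (k n : ℕ) : ℕ := (fun N => k * N + 1)^[k * n] 1

variable {ι κ : Type*} [LinearOrder ι] [Fintype κ]

lemma exists_subset_pair_coloring_eq_of_lt (f : ι → ι → κ) (n : ℕ) {s : Finset ι}
    (hs : (fun N => Fintype.card κ * N + 1)^[n] 1 ≤ #s) :
    ∃ t ⊆ s, #t = n ∧ ∃ g : ι → κ, ∀ i ∈ t, ∀ j ∈ t, i < j → f i j = g i := by
  classical
  induction n generalizing s with
  | zero => exact ⟨∅, empty_subset s, card_empty, fun i => f i i, by simp⟩
  | succ n ih =>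
    rw [Function.iterate_succ_apply'] at hs
    have hne : s.Nonempty := card_pos.1 (by omega)
    set a := s.min' hne
    have has : a ∈ s := s.min'_mem hne
    obtain ⟨k, -, hk⟩ := exists_le_card_fiber_of_mul_le_card_of_maps_to (s := s.erase a)
      (t := univ) (f := f a) (fun _ _ => mem_univ _) ⟨f a a, mem_univ _⟩
      (by rw [card_univ, card_erase_of_mem has]; exact Nat.le_sub_one_of_lt hs)
    obtain ⟨t, hts, htn, g, hg⟩ := ih hk
    have ht : ∀ j ∈ t, j ∈ s ∧ a < j ∧ f a j = k := fun j hj => by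
      obtain ⟨hjs, hfj⟩ := mem_filter.1 (hts hj)
      exact ⟨mem_of_mem_erase hjs, s.min'_lt_of_mem_erase_min' hne hjs, hfj⟩
    have hat : a ∉ t := fun h => lt_irrefl a (ht a h).2.1
    refine ⟨insert a t, insert_subset has fun j hj => (ht j hj).1,
      by rw [card_insert_of_notMem hat, htn], Function.update g a k, fun i hi j hj hij => ?_⟩
    have hjt : j ∈ t := (mem_insert.1 hj).resolve_left fun h =>
      hij.not_ge (h ▸ (mem_insert.1 hi).elim Eq.ge fun hi => (ht i hi).2.1.le)
    obtain rfl | hit := mem_insert.1 hi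
    · rw [Function.update_self, (ht j hjt).2.2]
    · rw [Function.update_of_ne (ne_of_mem_of_not_mem hit hat), hg i hit j hjt hij]

lemma exists_orderEmbedding_pair_coloring_eq [Fintype ι] (f : ι → ι → κ) (n : ℕ)
    (h : ramseyBound (Fintype.card κ) n ≤ Fintype.card ι) :
    ∃ (e : Fin n ↪o ι) (k : κ), ∀ i j, i < j → f (e i) (e j) = k := by
  classical
  obtain ⟨t, -, htn, g, hg⟩ := exists_subset_pair_coloring_eq_of_lt f (Fintype.card κ * n)
    (s := univ) h
  have hι : 0 < Fintype.card ι := lt_of_lt_of_le (by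
    unfold ramseyBound
    cases Fintype.card κ * n <;> simp [Function.iterate_succ_apply']) h
  obtain ⟨a⟩ := Fintype.card_pos_iff.1 hι
  obtain ⟨k, -, hk⟩ := exists_le_card_fiber_of_mul_le_card_of_maps_to (s := t) (t := univ)
    (f := g) (fun _ _ => mem_univ _) ⟨f a a, mem_univ _⟩ (by rw [card_univ, htn])
  obtain ⟨u, hu, hun⟩ := exists_subset_card_eq hk
  have hut : ∀ i, u.orderEmbOfFin hun i ∈ t ∧ g (u.orderEmbOfFin hun i) = k := fun i =>
    mem_filter.1 (hu (u.orderEmbOfFin_mem hun i))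
  refine ⟨u.orderEmbOfFin hun, k, fun i j hij => ?_⟩
  rw [hg _ (hut i).1 _ (hut j).1 ((OrderEmbedding.lt_iff_lt _).2 hij), (hut i).2]

end Ramsey

section Configurations

variable {k p m n : ℕ}

lemma isConfig_of_forall_eq {F : MatN k p} {A : MatN m n} (hrows : SimpleM F.transpose)
    (hcols : SimpleM F) {f : Fin k → Fin m} {g : Fin p → Fin n}
    (h : ∀ i j, A (f i) (g j) = F i j) : IsConfig F A :=
  ⟨f, g, fun i i' hii' => hrows i i' fun j => by simp only [Matrix.transpose_apply, ← h, hii'],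
    fun j j' hjj' => hcols j j' fun i => by simp only [← h, hjj'], h⟩

lemma bddAbove_columns (m r : ℕ) (𝓕 : Set CMat) :
    BddAbove {n : ℕ | ∃ A : MatN m n, RMat r A ∧ SimpleM A ∧ AvoidsFam A 𝓕} := by
  refine ⟨r ^ m, fun n ⟨A, hR, hS, _⟩ => ?_⟩
  let column : Fin n → Fin m → Fin r := fun j i => ⟨A i j, hR i j⟩
  have hcolumn : Function.Injective column := fun j j' h =>
    hS j j' fun i => congrArg Fin.val (congrFun h i)
  simpa using Fintype.card_le_of_injective column hcolumn

lemma le_forb {r : ℕ} {𝓕 : Set CMat} {A : MatN m n} (hR : RMat r A) (hS : SimpleM A)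
    (hA : AvoidsFam A 𝓕) : n ≤ forb m r 𝓕 :=
  le_csSup (bddAbove_columns m r 𝓕) ⟨A, hR, hS, hA⟩

lemma forb_le {r b : ℕ} {𝓕 : Set CMat}
    (h : ∀ n (A : MatN m n), RMat r A → SimpleM A → AvoidsFam A 𝓕 → n ≤ b) :
    forb m r 𝓕 ≤ b :=
  csSup_le' fun n ⟨A, hR, hS, hA⟩ => h n A hR hS hA

end Configurations

section IdentityAndTower

variable {ℓ a b : ℕ}

lemma transpose_Imat : (Imat ℓ a b).transpose = Imat ℓ a b := by
  ext i j
  simp only [Matrix.transpose_apply, Imat, eq_comm]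

lemma simpleM_Imat (hab : a ≠ b) : SimpleM (Imat ℓ a b) := fun j j' h => by
  by_contra hne
  have := h j
  simp only [Imat, if_true, if_neg hne] at this
  exact hab this

lemma simpleM_Tmat (hab : a ≠ b) : SimpleM (Tmat ℓ a b) := fun j j' h => by
  by_contra hne
  wlog hlt : j < j' generalizing j j'
  · exact this j' j (fun i => (h i).symm) (Ne.symm hne) (by omega)
  have := h j'
  simp only [Tmat, lt_irrefl, if_false, if_pos (Fin.lt_def.1 hlt)] at this
  exact hab this

lemma simpleM_transpose_Tmat (hab : a ≠ b) : SimpleM (Tmat ℓ a b).transpose := fun i i' h => by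
  by_contra hne
  wlog hlt : i < i' generalizing i i'
  · exact this i' i (fun j => (h j).symm) (Ne.symm hne) (by omega)
  have := h i
  simp only [Matrix.transpose_apply, Tmat, lt_irrefl, if_false, if_pos (Fin.lt_def.1 hlt)] at this
  exact hab this.symm

lemma exists_Imat_eq (hℓ : 2 ≤ ℓ) :
    (∃ i j, Imat ℓ a b i j = a) ∧ ∃ i j, Imat ℓ a b i j = b :=
  ⟨⟨⟨0, by omega⟩, ⟨0, by omega⟩, by simp [Imat]⟩, ⟨⟨0, by omega⟩, ⟨1, by omega⟩, by simp [Imat]⟩⟩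

lemma exists_Tmat_eq (hℓ : 2 ≤ ℓ) :
    (∃ i j, Tmat ℓ a b i j = a) ∧ ∃ i j, Tmat ℓ a b i j = b :=
  ⟨⟨⟨1, by omega⟩, ⟨0, by omega⟩, by simp [Tmat]⟩, ⟨⟨0, by omega⟩, ⟨0, by omega⟩, by simp [Tmat]⟩⟩

lemma lt_of_mem_TFam {s : ℕ} {M : CMat} (hM : M ∈ TFam ℓ s) (i : Fin M.rows) (j : Fin M.cols) :
    M.mat i j < s := by
  obtain ⟨a, b, ha, hb, -, rfl | rfl⟩ := hM
  · simp only [Imat]; split_ifs <;> assumption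
  · simp only [Tmat]; split_ifs <;> assumption

lemma mem_TFam_of_forall_lt (hℓ : 2 ≤ ℓ) {r s : ℕ} {M : CMat} (hM : M ∈ TFam ℓ r)
    (h : ∀ i j, M.mat i j < s) : M ∈ TFam ℓ s := by
  obtain ⟨a, b, -, -, hab, rfl | rfl⟩ := hM
  · obtain ⟨⟨i, j, ha⟩, i', j', hb⟩ := exists_Imat_eq (a := a) (b := b) hℓ
    exact ⟨a, b, ha ▸ h i j, hb ▸ h i' j', hab, Or.inl rfl⟩
  · obtain ⟨⟨i, j, ha⟩, i', j', hb⟩ := exists_Tmat_eq (a := a) (b := b) hℓ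
    exact ⟨a, b, ha ▸ h i j, hb ▸ h i' j', hab, Or.inr rfl⟩

end IdentityAndTower

/-- The matrix `H`: avoiding it means that no two rows have columns `00`, `10` and `01`. -/
abbrev matH : MatN 2 3 := !![0, 1, 0; 0, 0, 1]

section LowerBound

variable {m n : ℕ}

lemma avoidsFam_TFam_sdiff {ℓ r s : ℕ} (hℓ : 2 ≤ ℓ) {A : MatN m n} (hA : RMat s A) :
    AvoidsFam A (TFam ℓ r \ TFam ℓ s) := by
  rintro F ⟨hFr, hFs⟩ ⟨f, g, -, -, h⟩
  exact hFs (mem_TFam_of_forall_lt hℓ hFr fun i j => h i j ▸ hA (f i) (g j))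

lemma not_isConfig_matH_Tmat : ¬ IsConfig matH (Tmat m 0 1) := by
  rintro ⟨f, g, -, -, h⟩
  have h₀₁ := h 0 1
  have h₀₂ := h 0 2
  have h₁₁ := h 1 1
  have h₁₂ := h 1 2
  simp [Tmat] at h₀₁ h₀₂ h₁₁ h₁₂
  omega

lemma le_forb_TFam_sdiff_union_matH {ℓ r : ℕ} (hℓ : 2 ≤ ℓ) (hr : 2 ≤ r) (m : ℕ) :
    m ≤ forb m r ((TFam ℓ r \ TFam ℓ 2) ∪ {⟨2, 3, matH⟩}) := by
  have hT : RMat 2 (Tmat m 0 1) := fun i j => by simp only [Tmat]; split_ifs <;> norm_num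
  refine le_forb (fun i j => (hT i j).trans_le hr) (simpleM_Tmat zero_ne_one) ?_
  rintro F (hF | rfl)
  exacts [avoidsFam_TFam_sdiff hℓ hT F hF, not_isConfig_matH_Tmat]

end LowerBound

section Separated

variable {ℓ r m n : ℕ} {A : MatN m n}

lemma lt_two_of_forall_eq_Imat (hℓ : 2 ≤ ℓ) (hR : RMat r A)
    (hT : AvoidsFam A (TFam ℓ r \ TFam ℓ 2)) {p : Fin ℓ → Fin m} {c : Fin ℓ → Fin n} {a b : ℕ}
    (hab : a ≠ b) (h : ∀ i j, A (p i) (c j) = Imat ℓ a b i j) : a < 2 ∧ b < 2 := by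
  obtain ⟨⟨i, j, ha⟩, i', j', hb⟩ := exists_Imat_eq (a := a) (b := b) hℓ
  have hmem : (⟨ℓ, ℓ, Imat ℓ a b⟩ : CMat) ∈ TFam ℓ r :=
    ⟨a, b, ha ▸ h i j ▸ hR _ _, hb ▸ h i' j' ▸ hR _ _, hab, Or.inl rfl⟩
  have hconf : IsConfig (Imat ℓ a b) A :=
    isConfig_of_forall_eq (transpose_Imat.symm ▸ simpleM_Imat hab) (simpleM_Imat hab) h
  have hmem₂ : (⟨ℓ, ℓ, Imat ℓ a b⟩ : CMat) ∈ TFam ℓ 2 :=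
    by_contra fun h₂ => hT _ ⟨hmem, h₂⟩ hconf
  exact ⟨ha ▸ lt_of_mem_TFam hmem₂ i j, hb ▸ lt_of_mem_TFam hmem₂ i' j'⟩

lemma lt_two_of_forall_eq_Tmat (hℓ : 2 ≤ ℓ) (hR : RMat r A)
    (hT : AvoidsFam A (TFam ℓ r \ TFam ℓ 2)) {p : Fin ℓ → Fin m} {c : Fin ℓ → Fin n} {a b : ℕ}
    (hab : a ≠ b) (h : ∀ i j, A (p i) (c j) = Tmat ℓ a b i j) : a < 2 ∧ b < 2 := by
  obtain ⟨⟨i, j, ha⟩, i', j', hb⟩ := exists_Tmat_eq (a := a) (b := b) hℓ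
  have hmem : (⟨ℓ, ℓ, Tmat ℓ a b⟩ : CMat) ∈ TFam ℓ r :=
    ⟨a, b, ha ▸ h i j ▸ hR _ _, hb ▸ h i' j' ▸ hR _ _, hab, Or.inr rfl⟩
  have hconf : IsConfig (Tmat ℓ a b) A :=
    isConfig_of_forall_eq (simpleM_transpose_Tmat hab) (simpleM_Tmat hab) h
  have hmem₂ : (⟨ℓ, ℓ, Tmat ℓ a b⟩ : CMat) ∈ TFam ℓ 2 :=
    by_contra fun h₂ => hT _ ⟨hmem, h₂⟩ hconf
  exact ⟨ha ▸ lt_of_mem_TFam hmem₂ i j, hb ▸ lt_of_mem_TFam hmem₂ i' j'⟩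

lemma ne_and_lt_two_of_homogeneous (hℓ : 2 ≤ ℓ) (hR : RMat r A)
    (hT : AvoidsFam A (TFam ℓ r \ TFam ℓ 2)) {p : Fin (2 * ℓ) → Fin m} {c : Fin (2 * ℓ) → Fin n}
    {x y z : ℕ} (habove : ∀ i j, i < j → A (p i) (c j) = x) (hdiag : ∀ i, A (p i) (c i) = y)
    (hbelow : ∀ i j, j < i → A (p i) (c j) = z) (hxy : x ≠ y) (hspecial : 2 ≤ x ∨ 2 ≤ y) :
    x ≠ z ∧ x < 2 ∧ z < 2 := by
  have hxz : x ≠ z := by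
    rintro rfl
    let e : Fin ℓ → Fin (2 * ℓ) := Fin.castLE (by omega)
    have hI : ∀ i j, A (p (e i)) (c (e j)) = Imat ℓ y x i j := fun i j => by
      obtain hij | rfl | hij := lt_trichotomy i j
      · rw [habove _ _ hij, Imat, if_neg hij.ne]
      · rw [hdiag, Imat, if_pos rfl]
      · rw [hbelow _ _ hij, Imat, if_neg hij.ne']
    have := lt_two_of_forall_eq_Imat hℓ hR hT hxy.symm hI
    omega
  -- Interleaving the rows with the columns avoids the diagonal.
  have hTower : ∀ i j : Fin ℓ, A (p ⟨2 * i, by omega⟩) (c ⟨2 * j + 1, by omega⟩) =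
      Tmat ℓ z x i j := fun i j => by
    by_cases hji : (j : ℕ) < i
    · rw [hbelow _ _ (Fin.lt_def.2 (by dsimp only; omega)), Tmat, if_pos hji]
    · rw [habove _ _ (Fin.lt_def.2 (by dsimp only; omega)), Tmat, if_neg hji]
  exact ⟨hxz, (lt_two_of_forall_eq_Tmat hℓ hR hT hxz.symm hTower).symm⟩

/-- The length from which on `exists_ne_and_lt_two_of_separated` applies: the colour of a pair
`i < j` consists of the three entries above, on and below the diagonal, and the last index of the
homogeneous sequence is given up to make the diagonal constant. -/
def separationBound (ℓ r : ℕ) : ℕ := ramseyBound (r * (r * r)) (2 * ℓ + 1)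

lemma exists_ne_and_lt_two_of_separated (hℓ : 2 ≤ ℓ) (hR : RMat r A)
    (hT : AvoidsFam A (TFam ℓ r \ TFam ℓ 2)) {ι : Type*} [Fintype ι] [LinearOrder ι]
    {p : ι → Fin m} {c : ι → Fin n} (hcard : separationBound ℓ r ≤ Fintype.card ι)
    (hsep : ∀ i j, i < j → A (p i) (c j) ≠ A (p i) (c i))
    (hspecial : ∀ i j, i < j → 2 ≤ A (p i) (c j) ∨ 2 ≤ A (p i) (c i)) :
    ∃ i j k, i < j ∧ j < k ∧ A (p j) (c k) ≠ A (p j) (c i) ∧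
      A (p j) (c k) < 2 ∧ A (p j) (c i) < 2 := by
  let entry : ι → ι → Fin r := fun i j => ⟨A (p i) (c j), hR _ _⟩
  obtain ⟨e, ⟨x, y, z⟩, he⟩ := exists_orderEmbedding_pair_coloring_eq
    (fun i j => (entry i j, entry i i, entry j i)) (2 * ℓ + 1)
    (by simpa [separationBound] using hcard)
  simp only [Prod.mk.injEq, entry, Fin.ext_iff] at he
  have hdiag : ∀ i : Fin (2 * ℓ), A (p (e i.castSucc)) (c (e i.castSucc)) = y := fun i =>
    (he i.castSucc (Fin.last _) i.castSucc_lt_last).2.1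
  have habove : ∀ i j : Fin (2 * ℓ), i < j → A (p (e i.castSucc)) (c (e j.castSucc)) = x :=
    fun i j hij => (he i.castSucc j.castSucc hij).1
  have hbelow : ∀ i j : Fin (2 * ℓ), j < i → A (p (e i.castSucc)) (c (e j.castSucc)) = z :=
    fun i j hji => (he j.castSucc i.castSucc hji).2.2
  let i₀ : Fin (2 * ℓ) := ⟨0, by omega⟩
  let i₁ : Fin (2 * ℓ) := ⟨1, by omega⟩
  let i₂ : Fin (2 * ℓ) := ⟨2, by omega⟩
  have h₀₁ : i₀ < i₁ := Fin.lt_def.2 Nat.zero_lt_one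
  have h₁₂ : i₁ < i₂ := Fin.lt_def.2 Nat.one_lt_two
  have he₁₂ : e i₁.castSucc < e i₂.castSucc := e.lt_iff_lt.2 h₁₂
  refine ⟨e i₀.castSucc, e i₁.castSucc, e i₂.castSucc, e.lt_iff_lt.2 h₀₁, he₁₂, ?_⟩
  have hxy := hsep _ _ he₁₂
  have hxy₂ := hspecial _ _ he₁₂
  rw [habove _ _ h₁₂, hdiag] at hxy hxy₂
  rw [habove _ _ h₁₂, hbelow _ _ h₀₁]
  exact ne_and_lt_two_of_homogeneous hℓ hR hT habove hdiag hbelow hxy hxy₂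

end Separated

section Ladders

open Finset

variable {ℓ r m n : ℕ} {A : MatN m n} {S : Finset (Fin n)}

/-- `A` has a ladder of length `k` in the columns `S`: rows `pᵢ` and columns `cᵢ ∈ S`, `i < k`, such
that the entries `(pᵢ, cⱼ)` with `i < j` all equal a symbol `bᵢ ≥ 2` different from the entry
`(pᵢ, cᵢ)`. The maximal length of a ladder is the induction parameter of the upper bound. -/
def HasLadder (A : MatN m n) (k : ℕ) (S : Finset (Fin n)) : Prop :=
  ∃ (p : Fin k → Fin m) (c : Fin k → Fin n) (b : Fin k → ℕ),
    (∀ i, c i ∈ S ∧ 2 ≤ b i ∧ A (p i) (c i) ≠ b i) ∧ ∀ i j, i < j → A (p i) (c j) = b i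

lemma hasLadder_zero : HasLadder A 0 S :=
  ⟨Fin.elim0, Fin.elim0, Fin.elim0, fun i => i.elim0, fun i => i.elim0⟩

lemma HasLadder.mono {k : ℕ} {S' : Finset (Fin n)} (h : HasLadder A k S) (hS : S ⊆ S') :
    HasLadder A k S' := by
  obtain ⟨p, c, b, hc, hb⟩ := h
  exact ⟨p, c, b, fun i => ⟨hS (hc i).1, (hc i).2⟩, hb⟩

lemma HasLadder.succ {k b : ℕ} {q : Fin m} {c₀ : Fin n} (h : HasLadder A k {c ∈ S | A q c = b})
    (hc₀ : c₀ ∈ S) (hb : 2 ≤ b) (hne : A q c₀ ≠ b) : HasLadder A (k + 1) S := by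
  obtain ⟨p, c, b', hc, hb'⟩ := h
  refine ⟨Fin.cons q p, Fin.cons c₀ c, Fin.cons b b', fun i => ?_, fun i j hij => ?_⟩
  · cases i using Fin.cases with
    | zero => exact ⟨hc₀, hb, hne⟩
    | succ i => exact ⟨mem_of_mem_filter _ (hc i).1, (hc i).2⟩
  · cases j using Fin.cases with
    | zero => exact absurd hij (Fin.not_lt_zero i)
    | succ j =>
      cases i using Fin.cases with
      | zero => exact (mem_filter.1 (hc j).1).2
      | succ i => exact hb' i j (Fin.succ_lt_succ_iff.1 hij)

lemma not_hasLadder_separationBound (hℓ : 2 ≤ ℓ) (hR : RMat r A)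
    (hT : AvoidsFam A (TFam ℓ r \ TFam ℓ 2)) : ¬ HasLadder A (separationBound ℓ r) S := by
  rintro ⟨p, c, b, hc, hb⟩
  obtain ⟨-, j, k, -, hjk, -, hlt, -⟩ := exists_ne_and_lt_two_of_separated hℓ hR hT
    (Fintype.card_fin _).ge (fun i j hij => hb i j hij ▸ (hc i).2.2.symm)
    (fun i j hij => Or.inl (hb i j hij ▸ (hc i).2.1))
  exact hlt.not_ge (hb j k hjk ▸ (hc j).2.1)

end Ladders

section MixedRows

open Finset

variable {m n : ℕ} {A : MatN m n} {S S' : Finset (Fin n)} {q : Fin m} {c c' : Fin n}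

open scoped Classical in
/-- The rows in which both `0` and `1` occur among the columns `S`; their number controls the number
of columns. -/
noncomputable def mixedRows (A : MatN m n) (S : Finset (Fin n)) : Finset (Fin m) :=
  {q | (∃ c ∈ S, A q c = 0) ∧ ∃ c ∈ S, A q c = 1}

lemma mem_mixedRows : q ∈ mixedRows A S ↔ (∃ c ∈ S, A q c = 0) ∧ ∃ c ∈ S, A q c = 1 := by
  simp [mixedRows]

lemma mixedRows_mono (h : S ⊆ S') : mixedRows A S ⊆ mixedRows A S' := fun q hq => by
  obtain ⟨⟨c, hc, h₀⟩, c', hc', h₁⟩ := mem_mixedRows.1 hq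
  exact mem_mixedRows.2 ⟨⟨c, h hc, h₀⟩, c', h hc', h₁⟩

lemma mem_mixedRows_of_ne (hc : c ∈ S) (hc' : c' ∈ S) (hne : A q c ≠ A q c') (hlt : A q c < 2)
    (hlt' : A q c' < 2) : q ∈ mixedRows A S := by
  obtain ⟨h₀, h₁⟩ | ⟨h₁, h₀⟩ : A q c = 0 ∧ A q c' = 1 ∨ A q c = 1 ∧ A q c' = 0 := by omega
  · exact mem_mixedRows.2 ⟨⟨c, hc, h₀⟩, c', hc', h₁⟩
  · exact mem_mixedRows.2 ⟨⟨c', hc', h₀⟩, c, hc, h₁⟩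

lemma not_matH_pattern (hH : ¬ IsConfig matH A) {p q : Fin m} {c₁ c₂ c₃ : Fin n}
    (hp₁ : A p c₁ = 0) (hq₁ : A q c₁ = 0) (hp₂ : A p c₂ = 1) (hq₂ : A q c₂ = 0)
    (hp₃ : A p c₃ = 0) (hq₃ : A q c₃ = 1) : False := by
  refine hH (isConfig_of_forall_eq (f := ![p, q]) (g := ![c₁, c₂, c₃])
    (by unfold SimpleM; decide) (by unfold SimpleM; decide) fun i j => ?_)
  fin_cases i <;> fin_cases j <;> assumption

end MixedRows

section Pajor

open Finset

variable {m n : ℕ} {A : MatN m n} {S : Finset (Fin n)} {s : Finset (Fin m)}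

/-- The rows in which column `c` has the entry `1`: the set which a `(0,1)`-column stands for in
Pajor's inequality. -/
def oneRows (A : MatN m n) (c : Fin n) : Finset (Fin m) := {q | A q c = 1}

lemma exists_eq_one_iff_of_shatters (hs : (S.image (oneRows A)).Shatters s) {t : Finset (Fin m)}
    (ht : t ⊆ s) : ∃ c ∈ S, ∀ q ∈ s, A q c = 1 ↔ q ∈ t := by
  obtain ⟨u, hu, rfl⟩ := hs ht
  obtain ⟨c, hc, rfl⟩ := mem_image.1 hu
  exact ⟨c, hc, fun q hq => by simp [oneRows, hq]⟩

lemma lt_two_of_shatters (hS : ∀ c ∈ S, ∀ c' ∈ S, ∀ q, 2 ≤ A q c → A q c' = A q c)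
    (hs : (S.image (oneRows A)).Shatters s) {q : Fin m} (hq : q ∈ s) {c : Fin n} (hc : c ∈ S) :
    A q c < 2 := by
  obtain ⟨c', hc', h⟩ := exists_eq_one_iff_of_shatters hs (singleton_subset_iff.2 hq)
  have h₁ : A q c' = 1 := (h q hq).2 (mem_singleton_self q)
  by_contra! h₂
  have := hS c hc c' hc' q h₂
  omega

lemma subset_mixedRows_of_shatters (hS : ∀ c ∈ S, ∀ c' ∈ S, ∀ q, 2 ≤ A q c → A q c' = A q c)
    (hs : (S.image (oneRows A)).Shatters s) : s ⊆ mixedRows A S := fun q hq => by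
  obtain ⟨c, hc, h⟩ := exists_eq_one_iff_of_shatters hs (singleton_subset_iff.2 hq)
  obtain ⟨c', hc', h'⟩ := exists_eq_one_iff_of_shatters hs (empty_subset s)
  have h₁ : A q c = 1 := (h q hq).2 (mem_singleton_self q)
  have h₀ : A q c' ≠ 1 := fun h₁ => notMem_empty q ((h' q hq).1 h₁)
  exact mem_mixedRows_of_ne hc hc' (h₁.trans_ne h₀.symm) (lt_two_of_shatters hS hs hq hc)
    (lt_two_of_shatters hS hs hq hc')

lemma card_le_one_of_shatters (hH : ¬ IsConfig matH A)
    (hS : ∀ c ∈ S, ∀ c' ∈ S, ∀ q, 2 ≤ A q c → A q c' = A q c)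
    (hs : (S.image (oneRows A)).Shatters s) : #s ≤ 1 := by
  refine card_le_one.2 fun p hp q hq => by_contra fun hpq => ?_
  obtain ⟨c₁, hc₁, h₁⟩ := exists_eq_one_iff_of_shatters hs (empty_subset s)
  obtain ⟨c₂, hc₂, h₂⟩ := exists_eq_one_iff_of_shatters hs (singleton_subset_iff.2 hp)
  obtain ⟨c₃, hc₃, h₃⟩ := exists_eq_one_iff_of_shatters hs (singleton_subset_iff.2 hq)
  have eq_zero : ∀ {x c}, x ∈ s → c ∈ S → A x c ≠ 1 → A x c = 0 := fun hx hc h => by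
    have := lt_two_of_shatters hS hs hx hc
    omega
  exact not_matH_pattern hH (p := p) (q := q) (c₁ := c₁) (c₂ := c₂) (c₃ := c₃)
    (eq_zero hp hc₁ (by simp [h₁ p hp])) (eq_zero hq hc₁ (by simp [h₁ q hq]))
    (by simp [h₂ p hp]) (eq_zero hq hc₂ (by simp [h₂ q hq, Ne.symm hpq]))
    (eq_zero hp hc₃ (by simp [h₃ p hp, hpq])) (by simp [h₃ q hq])

lemma injOn_oneRows (hsimple : SimpleM A)
    (hS : ∀ c ∈ S, ∀ c' ∈ S, ∀ q, 2 ≤ A q c → A q c' = A q c) :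
    Set.InjOn (oneRows A) S := fun c hc c' hc' h => hsimple c c' fun q => by
  have h₁ : A q c = 1 ↔ A q c' = 1 := by simpa [oneRows] using Finset.ext_iff.1 h q
  have h₂ := hS c hc c' hc' q
  have h₂' := hS c' hc' c hc q
  omega

lemma card_le_card_mixedRows_add_one (hsimple : SimpleM A) (hH : ¬ IsConfig matH A)
    (hS : ∀ c ∈ S, ∀ c' ∈ S, ∀ q, 2 ≤ A q c → A q c' = A q c) :
    #S ≤ #(mixedRows A S) + 1 := by
  have hshatterer : (S.image (oneRows A)).shatterer ⊆
      insert ∅ ((mixedRows A S).image singleton) := fun s hs => by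
    rw [mem_shatterer] at hs
    obtain rfl | ⟨q, hq⟩ := s.eq_empty_or_nonempty
    · exact mem_insert_self _ _
    · have hsq : {q} = s := (eq_singleton_iff_unique_mem.2
        ⟨hq, fun x hx => card_le_one.1 (card_le_one_of_shatters hH hS hs) x hx q hq⟩).symm
      exact mem_insert_of_mem
        (mem_image.2 ⟨q, subset_mixedRows_of_shatters hS hs hq, hsq⟩)
  calc #S = #(S.image (oneRows A)) := (card_image_of_injOn (injOn_oneRows hsimple hS)).symm
    _ ≤ #(S.image (oneRows A)).shatterer := card_le_card_shatterer _
    _ ≤ #(insert ∅ ((mixedRows A S).image singleton)) := card_le_card hshatterer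
    _ ≤ #((mixedRows A S).image singleton) + 1 := card_insert_le _ _
    _ ≤ #(mixedRows A S) + 1 := by gcongr; exact card_image_le

end Pajor

section ExceptionalClasses

open Finset

variable {ℓ r m n : ℕ} {A : MatN m n} {S : Finset (Fin n)} {p q : Fin m} {c : Fin n}

open scoped Classical in
/-- The rows in which column `c` has a symbol `≥ 2` although the row is not constant on `S`. -/
noncomputable def exceptionalRows (A : MatN m n) (S : Finset (Fin n)) (c : Fin n) :
    Finset (Fin m) :=
  {p | 2 ≤ A p c ∧ ∃ c' ∈ S, A p c' ≠ A p c}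

/-- The columns of `S` whose first exceptional row is `p`. These classes, together with the columns
without exceptional rows, partition `S`. -/
noncomputable def exceptionalClass (A : MatN m n) (S : Finset (Fin n)) (p : Fin m) :
    Finset (Fin n) :=
  {c ∈ S | p ∈ exceptionalRows A S c ∧ ∀ q < p, q ∉ exceptionalRows A S c}

lemma mem_exceptionalRows :
    p ∈ exceptionalRows A S c ↔ 2 ≤ A p c ∧ ∃ c' ∈ S, A p c' ≠ A p c := by
  simp [exceptionalRows]

lemma mem_exceptionalRows_of_mem_exceptionalClass (hc : c ∈ exceptionalClass A S p) :
    p ∈ exceptionalRows A S c :=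
  (mem_filter.1 hc).2.1

lemma exceptionalClass_subset : exceptionalClass A S p ⊆ S := filter_subset _ _

lemma two_le_of_mem_exceptionalClass (hc : c ∈ exceptionalClass A S p) : 2 ≤ A p c :=
  (mem_exceptionalRows.1 (mem_exceptionalRows_of_mem_exceptionalClass hc)).1

lemma lt_two_of_mem_exceptionalClass_of_lt {c' : Fin n} (hc : c ∈ exceptionalClass A S p)
    (hc' : c' ∈ exceptionalClass A S q) (hpq : p < q) : A p c' < 2 := by
  obtain ⟨-, d, hd, hdc⟩ :=
    mem_exceptionalRows.1 (mem_exceptionalRows_of_mem_exceptionalClass hc)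
  by_contra! h₂
  have hconst : ∀ d ∈ S, A p d = A p c' := by
    by_contra! hnonconst
    exact (mem_filter.1 hc').2.2 p hpq (mem_exceptionalRows.2 ⟨h₂, hnonconst⟩)
  exact hdc ((hconst d hd).trans (hconst c (exceptionalClass_subset hc)).symm)

lemma subset_filter_union_biUnion_exceptionalClass :
    S ⊆ {c ∈ S | exceptionalRows A S c = ∅} ∪
      ({p | (exceptionalClass A S p).Nonempty} : Finset (Fin m)).biUnion
        (exceptionalClass A S) := fun c hc => by
  obtain h | h := (exceptionalRows A S c).eq_empty_or_nonempty
  · exact mem_union_left _ (mem_filter.2 ⟨hc, h⟩)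
  · have hmem : c ∈ exceptionalClass A S ((exceptionalRows A S c).min' h) :=
      mem_filter.2 ⟨hc, min'_mem _ h, fun q hq hqc => hq.not_ge (min'_le _ q hqc)⟩
    exact mem_union_right _ (mem_biUnion.2 ⟨_, mem_filter.2 ⟨mem_univ _, c, hmem⟩, hmem⟩)

lemma card_filter_exceptionalRows_eq_empty_le (hsimple : SimpleM A) (hH : ¬ IsConfig matH A) :
    #{c ∈ S | exceptionalRows A S c = ∅} ≤ #(mixedRows A S) + 1 := by
  refine (card_le_card_mixedRows_add_one hsimple hH fun c hc c' hc' q h₂ => ?_).trans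
    (Nat.add_le_add_right (card_le_card (mixedRows_mono (filter_subset _ S))) 1)
  by_contra hne
  have hq : q ∈ exceptionalRows A S c :=
    mem_exceptionalRows.2 ⟨h₂, c', mem_of_mem_filter _ hc', hne⟩
  exact notMem_empty q ((mem_filter.1 hc).2 ▸ hq)

lemma card_sdiff_mixedRows_lt (hℓ : 2 ≤ ℓ) (hR : RMat r A)
    (hT : AvoidsFam A (TFam ℓ r \ TFam ℓ 2)) {s : Finset (Fin m)} {C : Fin m → Finset (Fin n)}
    (hC : ∀ p ∈ s, C p ⊆ exceptionalClass A S p) (hne : ∀ p ∈ s, (C p).Nonempty) :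
    #(s \ mixedRows A (s.biUnion C)) < separationBound ℓ r := by
  by_contra! hcard
  set u := s \ mixedRows A (s.biUnion C)
  have hus : ∀ i : u, i.1 ∈ s := fun i => (mem_sdiff.1 i.2).1
  choose c hc using fun i : u => hne i (hus i)
  have hclass : ∀ i : u, c i ∈ exceptionalClass A S i := fun i => hC i (hus i) (hc i)
  have hdiag : ∀ i : u, 2 ≤ A i (c i) := fun i => two_le_of_mem_exceptionalClass (hclass i)
  have habove : ∀ i j : u, i < j → A i (c j) < 2 := fun i j hij =>
    lt_two_of_mem_exceptionalClass_of_lt (hclass i) (hclass j) hij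
  obtain ⟨i, j, k, -, -, hne, hk, hi⟩ := exists_ne_and_lt_two_of_separated hℓ hR hT
    (p := fun i : u => i.1) (c := c) (by simpa using hcard)
    (fun i j hij => ((habove i j hij).trans_le (hdiag i)).ne) (fun i _ _ => Or.inr (hdiag i))
  have hmem : ∀ i : u, c i ∈ s.biUnion C := fun i => mem_biUnion.2 ⟨i, hus i, hc i⟩
  exact (mem_sdiff.1 j.2).2 (mem_mixedRows_of_ne (hmem k) (hmem i) hne hk hi)

lemma card_nonempty_exceptionalClass_le (hℓ : 2 ≤ ℓ) (hR : RMat r A)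
    (hT : AvoidsFam A (TFam ℓ r \ TFam ℓ 2)) :
    #{p | (exceptionalClass A S p).Nonempty} ≤ #(mixedRows A S) + separationBound ℓ r := by
  set U : Finset (Fin m) := {p | (exceptionalClass A S p).Nonempty}
  have hsub : mixedRows A (U.biUnion (exceptionalClass A S)) ⊆ mixedRows A S :=
    mixedRows_mono (biUnion_subset.2 fun _ _ => exceptionalClass_subset)
  have hlt := card_sdiff_mixedRows_lt hℓ hR hT (s := U) (S := S) (fun _ _ => Subset.rfl)
    fun p hp => (mem_filter.1 hp).2
  have := card_le_card_sdiff_add_card (s := U) (t := mixedRows A (U.biUnion (exceptionalClass A S)))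
  have := card_le_card hsub
  omega

lemma card_filter_mem_mixedRows_exceptionalClass_le (hℓ : 2 ≤ ℓ) (hR : RMat r A)
    (hT : AvoidsFam A (TFam ℓ r \ TFam ℓ 2)) (hH : ¬ IsConfig matH A) (q : Fin m) :
    #{p | q ∈ mixedRows A (exceptionalClass A S p)} ≤ 2 * separationBound ℓ r := by
  set s : Finset (Fin m) := {p | q ∈ mixedRows A (exceptionalClass A S p)}
  let C : ℕ → Fin m → Finset (Fin n) := fun x p => {c ∈ exceptionalClass A S p | A q c = x}
  have hmixed : ∀ p ∈ s, (∃ c ∈ exceptionalClass A S p, A q c = 0) ∧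
      ∃ c ∈ exceptionalClass A S p, A q c = 1 := fun p hp => mem_mixedRows.1 (mem_filter.1 hp).2
  have h₀ := card_sdiff_mixedRows_lt hℓ hR hT (s := s) (C := C 0) (fun p _ => filter_subset _ _)
    fun p hp => filter_nonempty_iff.2 (hmixed p hp).1
  have h₁ := card_sdiff_mixedRows_lt hℓ hR hT (s := s) (C := C 1) (fun p _ => filter_subset _ _)
    fun p hp => filter_nonempty_iff.2 (hmixed p hp).2
  have eq_of_mem : ∀ {x c}, c ∈ s.biUnion (C x) → A q c = x := fun hc => by
    obtain ⟨p, -, hp⟩ := mem_biUnion.1 hc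
    exact (mem_filter.1 hp).2
  -- A row mixed both in the columns with `0` and in those with `1` in row `q` yields `H`.
  have hcover : s ⊆ (s \ mixedRows A (s.biUnion (C 0))) ∪ (s \ mixedRows A (s.biUnion (C 1))) := by
    rw [← sdiff_inter_distrib_right]
    refine fun p hp => mem_sdiff.2 ⟨hp, fun hp₀₁ => ?_⟩
    obtain ⟨hp₀, hp₁⟩ := mem_inter.1 hp₀₁
    obtain ⟨⟨a, ha, hpa⟩, b, hb, hpb⟩ := mem_mixedRows.1 hp₀
    obtain ⟨⟨d, hd, hpd⟩, -⟩ := mem_mixedRows.1 hp₁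
    exact not_matH_pattern hH (eq_of_mem ha) hpa (eq_of_mem hd) hpd (eq_of_mem hb) hpb
  have := (card_le_card hcover).trans (card_union_le _ _)
  omega

lemma sum_card_mixedRows_exceptionalClass_le (hℓ : 2 ≤ ℓ) (hR : RMat r A)
    (hT : AvoidsFam A (TFam ℓ r \ TFam ℓ 2)) (hH : ¬ IsConfig matH A) (U : Finset (Fin m)) :
    ∑ p ∈ U, #(mixedRows A (exceptionalClass A S p)) ≤
      #(mixedRows A S) * (2 * separationBound ℓ r) := by
  let mixedIn : Fin m → Fin m → Prop := fun p q => q ∈ mixedRows A (exceptionalClass A S p)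
  have habove : ∀ p, mixedRows A (exceptionalClass A S p) ⊆
      (mixedRows A S).bipartiteAbove mixedIn p := fun p q hq =>
    mem_filter.2 ⟨mixedRows_mono exceptionalClass_subset hq, hq⟩
  have hbelow : ∀ q, #(U.bipartiteBelow mixedIn q) ≤ 2 * separationBound ℓ r := fun q =>
    (card_le_card (filter_subset_filter _ (subset_univ U))).trans
      (card_filter_mem_mixedRows_exceptionalClass_le hℓ hR hT hH q)
  calc ∑ p ∈ U, #(mixedRows A (exceptionalClass A S p))
      ≤ ∑ p ∈ U, #((mixedRows A S).bipartiteAbove mixedIn p) :=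
        sum_le_sum fun p _ => card_le_card (habove p)
    _ = ∑ q ∈ mixedRows A S, #(U.bipartiteBelow mixedIn q) :=
        sum_card_bipartiteAbove_eq_sum_card_bipartiteBelow mixedIn
    _ ≤ #(mixedRows A S) * (2 * separationBound ℓ r) :=
        sum_le_card_nsmul _ _ _ fun q _ => hbelow q

lemma card_exceptionalClass_le (hR : RMat r A) {k K : ℕ}
    (hK : ∀ S' : Finset (Fin n), ¬ HasLadder A k S' → #S' ≤ K * (#(mixedRows A S') + 1))
    (hS : ¬ HasLadder A (k + 1) S) (p : Fin m) :
    #(exceptionalClass A S p) ≤ K * (#(mixedRows A (exceptionalClass A S p)) + 1) * r := by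
  set T := exceptionalClass A S p
  have hfiber : ∀ b, #{c ∈ T | A p c = b} ≤ K * (#(mixedRows A T) + 1) := fun b => by
    obtain h | ⟨c, hc⟩ := {c ∈ T | A p c = b}.eq_empty_or_nonempty
    · simp [h]
    obtain ⟨hcT, rfl⟩ := mem_filter.1 hc
    obtain ⟨h₂, c', hc', hne⟩ :=
      mem_exceptionalRows.1 (mem_exceptionalRows_of_mem_exceptionalClass hcT)
    have hshort : ¬ HasLadder A k {d ∈ T | A p d = A p c} := fun h =>
      hS ((h.mono (filter_subset_filter _ exceptionalClass_subset)).succ hc' h₂ hne)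
    refine (hK _ hshort).trans ?_
    gcongr
    exact mixedRows_mono (filter_subset _ T)
  simpa using card_le_mul_card_image_of_maps_to (s := T) (t := range r) (f := A p)
    (fun c _ => mem_range.2 (hR p c)) _ fun b _ => hfiber b

end ExceptionalClasses

section UpperBound

open Finset

variable {ℓ r m n : ℕ} {A : MatN m n}

lemma card_le_of_not_hasLadder (hℓ : 2 ≤ ℓ) (hR : RMat r A) (hsimple : SimpleM A)
    (hT : AvoidsFam A (TFam ℓ r \ TFam ℓ 2)) (hH : ¬ IsConfig matH A) {k : ℕ}
    {S : Finset (Fin n)} (hS : ¬ HasLadder A k S) :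
    #S ≤ (r * (2 * separationBound ℓ r + 1) + 1) ^ k * (#(mixedRows A S) + 1) := by
  induction k generalizing S with
  | zero => exact absurd hasLadder_zero hS
  | succ k ih =>
    set N := separationBound ℓ r
    set K := (r * (2 * N + 1) + 1) ^ k with hK
    set ρ := #(mixedRows A S)
    set U : Finset (Fin m) := {p | (exceptionalClass A S p).Nonempty}
    have hUcard : #U ≤ ρ + N := card_nonempty_exceptionalClass_le hℓ hR hT
    have hsum : ∑ p ∈ U, #(mixedRows A (exceptionalClass A S p)) ≤ ρ * (2 * N) :=
      sum_card_mixedRows_exceptionalClass_le hℓ hR hT hH U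
    have hK₁ : 1 ≤ K := Nat.one_le_pow _ _ (Nat.succ_pos _)
    calc #S ≤ #{c ∈ S | exceptionalRows A S c = ∅} + #(U.biUnion (exceptionalClass A S)) :=
          (card_le_card subset_filter_union_biUnion_exceptionalClass).trans (card_union_le _ _)
      _ ≤ (ρ + 1) + ∑ p ∈ U, #(exceptionalClass A S p) :=
          add_le_add (card_filter_exceptionalRows_eq_empty_le hsimple hH) card_biUnion_le
      _ ≤ (ρ + 1) + ∑ p ∈ U, K * (#(mixedRows A (exceptionalClass A S p)) + 1) * r := by
          gcongr with p
          exact card_exceptionalClass_le hR (fun S' => ih) hS p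
      _ = (ρ + 1) + K * (∑ p ∈ U, #(mixedRows A (exceptionalClass A S p)) + #U) * r := by
          rw [← sum_mul, ← mul_sum, sum_add_distrib, card_eq_sum_ones]
      _ ≤ K * (ρ + 1) + K * (ρ * (2 * N) + (ρ + N)) * r := by
          gcongr
          exact Nat.le_mul_of_pos_left _ hK₁
      _ ≤ K * (ρ + 1) + K * ((2 * N + 1) * (ρ + 1)) * r := by
          gcongr
          linarith
      _ = (r * (2 * N + 1) + 1) ^ (k + 1) * (ρ + 1) := by
          rw [pow_succ, ← hK]
          ring

lemma exists_forb_TFam_sdiff_union_matH_le (r : ℕ) (hℓ : 2 ≤ ℓ) :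
    ∃ K : ℕ, ∀ m, forb m r ((TFam ℓ r \ TFam ℓ 2) ∪ {⟨2, 3, matH⟩}) ≤ K * (m + 1) := by
  refine ⟨(r * (2 * separationBound ℓ r + 1) + 1) ^ separationBound ℓ r, fun m =>
    forb_le fun n A hR hS hA => ?_⟩
  have hT : AvoidsFam A (TFam ℓ r \ TFam ℓ 2) := fun F hF => hA F (Or.inl hF)
  have hH : ¬ IsConfig matH A := hA _ (Or.inr rfl)
  calc n = #(univ : Finset (Fin n)) := (card_fin n).symm
    _ ≤ _ * (#(mixedRows A univ) + 1) :=
        card_le_of_not_hasLadder hℓ hR hS hT hH (not_hasLadder_separationBound hℓ hR hT)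
    _ ≤ _ * (m + 1) := by
        gcongr
        exact card_finset_fin_le _

end UpperBound

theorem stmt7_general (ℓ r : ℕ) (hℓ : 2 ≤ ℓ) (hr : 2 ≤ r) :
    ∃ c₁ c₂ : ℝ, 0 < c₁ ∧ 0 < c₂ ∧ ∀ m : ℕ, 1 ≤ m →
      c₁ * (m : ℝ) ≤
        (forb m r ((TFam ℓ r \ TFam ℓ 2) ∪ {⟨2, 3, !![0, 1, 0; 0, 0, 1]⟩}) : ℝ) ∧
      (forb m r ((TFam ℓ r \ TFam ℓ 2) ∪ {⟨2, 3, !![0, 1, 0; 0, 0, 1]⟩}) : ℝ) ≤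
        c₂ * (m : ℝ) := by
  obtain ⟨K, hK⟩ := exists_forb_TFam_sdiff_union_matH_le r hℓ
  refine ⟨1, 2 * K + 1, one_pos, by positivity, fun m hm => ⟨?_, ?_⟩⟩
  · rw [one_mul]
    exact_mod_cast le_forb_TFam_sdiff_union_matH hℓ hr m
  · have hup : forb m r _ ≤ (2 * K + 1) * m := (hK m).trans (by nlinarith)
    exact_mod_cast hup

/-- For `ℓ ≥ 2` and `H` the `2×3` matrix with rows `[0 1 0]`, `[0 0 1]`,
`forb(m, 3, (𝒯_ℓ(3) \ 𝒯_ℓ(2)) ∪ {H})` is `Θ(m)`. -/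
theorem stmt7 (ℓ : ℕ) (hℓ : 2 ≤ ℓ) :
    ∃ c₁ c₂ : ℝ, 0 < c₁ ∧ 0 < c₂ ∧ ∀ m : ℕ, 1 ≤ m →
      c₁ * (m : ℝ) ≤
        (forb m 3 ((TFam ℓ 3 \ TFam ℓ 2) ∪ {⟨2, 3, !![0, 1, 0; 0, 0, 1]⟩}) : ℝ) ∧
      (forb m 3 ((TFam ℓ 3 \ TFam ℓ 2) ∪ {⟨2, 3, !![0, 1, 0; 0, 0, 1]⟩}) : ℝ) ≤
        c₂ * (m : ℝ) :=
  stmt7_general ℓ 3 hℓ (by norm_num)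
end
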